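/- arXiv:1502.07452 — 2 statements merged into one kernel-verified Lean document; each statement's English description precedes it below -/
import Mathlib

section
/- Fix n, d ∈ ℕ, 1 ≤ p < ∞, T > 0, x ∈ ℝ^n, and smooth vector fields X_0, X_1, …, X_d : ℝ^n → ℝ^n. Then the set of controls u = (u_1, …, u_d) ∈ L^p([0,T], ℝ^d) for which there exists an absolutely continuous curve γ : [0,T] → ℝ^n satisfying γ(t) = x + ∫_0^t ( X_0(γ(s)) + Σ_{i=1}^d u_i(s) X_i(γ(s)) ) ds for all t ∈ [0,T] is an open subset of L^p([0,T], ℝ^d). -/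
open MeasureTheory Set

noncomputable section

/-- `γ` is the trajectory on `[0,T]` of the control `u` starting at `x`, for the affine
control system `γ' = X₀(γ) + Σᵢ uᵢ Xᵢ(γ)`: a continuous (hence, given the integral
equation, absolutely continuous) curve satisfying
`γ(t) = x + ∫₀ᵗ (X₀(γ(s)) + Σᵢ uᵢ(s) Xᵢ(γ(s))) ds` on `[0,T]`. -/
def IsTrajectory {n d : ℕ}
    (X0 : EuclideanSpace ℝ (Fin n) → EuclideanSpace ℝ (Fin n))
    (X : Fin d → EuclideanSpace ℝ (Fin n) → EuclideanSpace ℝ (Fin n))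
    (x : EuclideanSpace ℝ (Fin n)) (T : ℝ)
    (u : ℝ → EuclideanSpace ℝ (Fin d))
    (γ : ℝ → EuclideanSpace ℝ (Fin n)) : Prop :=
  ContinuousOn γ (Set.Icc 0 T) ∧
    ∀ t ∈ Set.Icc (0:ℝ) T,
      γ t = x + ∫ s in (0:ℝ)..t, (X0 (γ s) + ∑ i, u s i • X i (γ s))

/-!
Let `γ₀` be the trajectory of `u₀`. Along its compact image the fields are Lipschitz with one
constant `L` on all balls of one radius `r`, so near `γ₀` the field driven by a control `u` has the
Lipschitz constant `k(s) = L (1 + ‖u(s)‖)`, which is integrable in time. In the sup norm weighted by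
`exp (-2 ∫₀ᵗ k)` the Picard operator of `u` therefore contracts with ratio `1 / 2` within the tube
of radius `r` around `γ₀`, however large `T` is.

The curve `γ₀` solves the equation of `u` up to an error `∫₀ᵗ A(γ₀) (u - u₀)`, where `A` collects
the controlled fields. This is at most a constant times `‖u - u₀‖` in `L¹`, hence small when `u` is
close to `u₀` in `Lᵖ`. Once it is small relative to `r exp (-2 ∫₀ᵀ k)`, the Picard operator maps a
weighted ball around `γ₀` inside the tube to itself, and its fixed point is a trajectory of `u`.
-/

open Filter Metric
open scoped Topology NNReal ENNReal

section Contraction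

theorem exists_fixedPoint_mem_closedBall {X : Type*} [MetricSpace X] [CompleteSpace X] {Ψ : X → X}
    {K : ℝ≥0} (hK : K < 1) {x₀ : X} {ρ : ℝ} (hρ : 0 ≤ ρ)
    (hΨ : LipschitzOnWith K Ψ (closedBall x₀ ρ)) (hx₀ : dist (Ψ x₀) x₀ ≤ (1 - K) * ρ) :
    ∃ x ∈ closedBall x₀ ρ, Ψ x = x := by
  have center_mem : x₀ ∈ closedBall x₀ ρ := mem_closedBall_self hρ
  have maps_ball : MapsTo Ψ (closedBall x₀ ρ) (closedBall x₀ ρ) := by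
    intro x hx
    calc dist (Ψ x) x₀ ≤ dist (Ψ x) (Ψ x₀) + dist (Ψ x₀) x₀ := dist_triangle _ _ _
      _ ≤ K * ρ + (1 - K) * ρ := by
          gcongr
          exact (hΨ.dist_le_mul x hx x₀ center_mem).trans (by gcongr; exact hx)
      _ = ρ := by ring
  have contracting : ContractingWith K (maps_ball.restrict Ψ _ _) :=
    ⟨hK, hΨ.mapsToRestrict maps_ball⟩
  obtain ⟨x, hx, fixed, -⟩ := contracting.exists_fixedPoint' isClosed_closedBall.isComplete
    maps_ball center_mem (edist_ne_top _ _)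
  exact ⟨x, hx, fixed⟩

variable {α E : Type*} [TopologicalSpace α] [CompactSpace α] [NormedAddCommGroup E]
  [NormedSpace ℝ E]

lemma dist_le_iff_norm_smul_sub_smul_le {w : C(α, ℝ)} (hw : ∀ a, 0 < w a) {η ζ : C(α, E)} {c : ℝ}
    (hc : 0 ≤ c) : dist η ζ ≤ c ↔ ∀ a, ‖(w • η) a - (w • ζ) a‖ ≤ c * w a := by
  rw [ContinuousMap.dist_le hc]
  refine forall_congr' fun a => ?_
  rw [ContinuousMap.smul_apply', ContinuousMap.smul_apply', ← smul_sub, norm_smul,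
    Real.norm_of_nonneg (hw a).le, mul_comm, mul_le_mul_iff_left₀ (hw a), dist_eq_norm]

theorem exists_fixedPoint_of_weighted_contraction [CompleteSpace E] {w : C(α, ℝ)}
    (hw : ∀ a, 0 < w a) {Φ : C(α, E) → C(α, E)} {γ₀ : C(α, E)} {K : ℝ≥0} (hK : K < 1) {ρ : ℝ}
    (hρ : 0 ≤ ρ)
    (hΦ : ∀ γ γ' : C(α, E), (∀ a, ‖γ a - γ₀ a‖ ≤ ρ * w a) → (∀ a, ‖γ' a - γ₀ a‖ ≤ ρ * w a) →
      ∀ c, (∀ a, ‖γ a - γ' a‖ ≤ c * w a) → ∀ a, ‖Φ γ a - Φ γ' a‖ ≤ K * c * w a)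
    (hγ₀ : ∀ a, ‖Φ γ₀ a - γ₀ a‖ ≤ (1 - K) * ρ * w a) :
    ∃ γ, Φ γ = γ ∧ ∀ a, ‖γ a - γ₀ a‖ ≤ ρ * w a := by
  lift w to C(α, ℝ)ˣ using w.isUnit_iff_forall_ne_zero.2 fun a => (hw a).ne'
  let Ψ : C(α, E) → C(α, E) := fun η => w⁻¹ • Φ (w • η)
  have smul_Ψ (η : C(α, E)) : (w : C(α, ℝ)) • Ψ η = Φ ((w : C(α, ℝ)) • η) := smul_inv_smul w _
  let η₀ : C(α, E) := w⁻¹ • γ₀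
  have smul_η₀ : (w : C(α, ℝ)) • η₀ = γ₀ := smul_inv_smul w _
  have mem_ball {η : C(α, E)} :
      η ∈ closedBall η₀ ρ ↔ ∀ a, ‖((w : C(α, ℝ)) • η) a - γ₀ a‖ ≤ ρ * (w : C(α, ℝ)) a := by
    rw [mem_closedBall, dist_le_iff_norm_smul_sub_smul_le hw hρ, smul_η₀]
  have contracts : LipschitzOnWith K Ψ (closedBall η₀ ρ) := by
    refine LipschitzOnWith.of_dist_le_mul fun η hη ζ hζ => ?_
    rw [dist_le_iff_norm_smul_sub_smul_le hw (by positivity), smul_Ψ, smul_Ψ]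
    exact hΦ _ _ (mem_ball.1 hη) (mem_ball.1 hζ) _
      ((dist_le_iff_norm_smul_sub_smul_le hw dist_nonneg).1 le_rfl)
  have center_moves : dist (Ψ η₀) η₀ ≤ (1 - K) * ρ := by
    have hK' : (0 : ℝ) ≤ 1 - K := sub_nonneg.2 (mod_cast hK.le)
    rw [dist_le_iff_norm_smul_sub_smul_le hw (mul_nonneg hK' hρ), smul_Ψ, smul_η₀]
    exact hγ₀
  obtain ⟨η, hη, fixed⟩ := exists_fixedPoint_mem_closedBall hK hρ contracts center_moves
  exact ⟨(w : C(α, ℝ)) • η, by rw [← smul_Ψ, fixed], mem_ball.1 hη⟩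

end Contraction

section BieleckiWeight

/-- The Bielecki weight `exp (2 ∫ₐᵗ k)`: measured relative to it, the Picard operator of a field
with Lipschitz constant `k s` at time `s` is a contraction of ratio `1 / 2`, however long the time
interval. -/
def bieleckiWeight (k : ℝ → ℝ≥0) (a t : ℝ) : ℝ := Real.exp (∫ s in a..t, 2 * (k s : ℝ))

variable {k : ℝ → ℝ≥0} {a b : ℝ}

lemma bieleckiWeight_pos (t : ℝ) : 0 < bieleckiWeight k a t := Real.exp_pos _

lemma bieleckiWeight_self : bieleckiWeight k a a = 1 := by simp [bieleckiWeight]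

lemma bieleckiWeight_const_mul_one_add_nnnorm {F : Type*} [NormedAddCommGroup F] {u : ℝ → F}
    (hu : IntervalIntegrable u volume a b) (L : ℝ≥0) :
    bieleckiWeight (fun s => L * (1 + ‖u s‖₊)) a b =
      Real.exp (2 * L * (b - a + ∫ s in a..b, ‖u s‖)) := by
  simp only [bieleckiWeight, NNReal.coe_mul, NNReal.coe_add, NNReal.coe_one, coe_nnnorm,
    intervalIntegral.integral_const_mul]
  rw [intervalIntegral.integral_add intervalIntegrable_const hu.norm,
    intervalIntegral.integral_const, smul_eq_mul, mul_one, mul_assoc]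

lemma monotoneOn_bieleckiWeight (hab : a ≤ b)
    (hk : IntervalIntegrable (fun s => (k s : ℝ)) volume a b) :
    MonotoneOn (bieleckiWeight k a) (Icc a b) := by
  intro s hs t ht hst
  rw [← uIcc_of_le hab] at ht
  exact Real.exp_le_exp.2 (intervalIntegral.integral_mono_interval le_rfl hs.1 hst
    (Eventually.of_forall fun r => by positivity)
    ((hk.const_mul 2).mono_set (uIcc_subset_uIcc left_mem_uIcc ht)))

lemma continuousOn_bieleckiWeight (hk : IntervalIntegrable (fun s => (k s : ℝ)) volume a b) :
    ContinuousOn (bieleckiWeight k a) (uIcc a b) :=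
  (intervalIntegral.continuousOn_primitive_interval' (hk.const_mul 2) left_mem_uIcc).rexp

lemma integral_mul_bieleckiWeight_le (hab : a ≤ b)
    (hk : IntervalIntegrable (fun s => (k s : ℝ)) volume a b) :
    ∫ s in a..b, k s * bieleckiWeight k a s ≤ 1 / 2 * bieleckiWeight k a b := by
  have hmono : MonotoneOn (bieleckiWeight k a) (uIcc a b) := by
    rw [uIcc_of_le hab]
    exact monotoneOn_bieleckiWeight hab hk
  have deriv_ae : ∀ᵐ s, s ∈ uIoc a b →
      k s * bieleckiWeight k a s = 1 / 2 * deriv (bieleckiWeight k a) s := by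
    filter_upwards [(hk.const_mul 2).ae_hasDerivAt_integral] with s hs hsab
    have := (hs (uIoc_subset_uIcc hsab) a left_mem_uIcc).exp.deriv
    change deriv (bieleckiWeight k a) s = bieleckiWeight k a s * (2 * k s) at this
    rw [this]
    ring
  -- Monotonicity alone bounds the integral of the a.e. derivative, so absolute continuity of the
  -- weight is never needed.
  have integral_deriv_le :
      ∫ s in a..b, deriv (bieleckiWeight k a) s ≤ bieleckiWeight k a b - bieleckiWeight k a a := by
    have := hmono.intervalIntegral_deriv_mem_uIcc
    rw [uIcc_of_le (sub_nonneg.2 (hmono left_mem_uIcc right_mem_uIcc hab))] at this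
    exact this.2
  rw [intervalIntegral.integral_congr_ae deriv_ae, intervalIntegral.integral_const_mul]
  gcongr
  exact integral_deriv_le.trans (sub_le_self _ (bieleckiWeight_pos a).le)

lemma norm_integral_sub_integral_le_bieleckiWeight {E : Type*} [NormedAddCommGroup E]
    [NormedSpace ℝ E] {V : ℝ → E → E} {S : ℝ → Set E} {γ γ' : ℝ → E} {c : ℝ} (hab : a ≤ b)
    (hc : 0 ≤ c) (hk : IntervalIntegrable (fun s => (k s : ℝ)) volume a b)
    (hV : ∀ s ∈ Icc a b, LipschitzOnWith (k s) (V s) (S s))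
    (hγ : ∀ s ∈ Icc a b, γ s ∈ S s) (hγ' : ∀ s ∈ Icc a b, γ' s ∈ S s)
    (hVγ : IntervalIntegrable (fun s => V s (γ s)) volume a b)
    (hVγ' : IntervalIntegrable (fun s => V s (γ' s)) volume a b)
    (hγγ' : ∀ s ∈ Icc a b, ‖γ s - γ' s‖ ≤ c * bieleckiWeight k a s) :
    ‖(∫ s in a..b, V s (γ s)) - ∫ s in a..b, V s (γ' s)‖ ≤
      1 / 2 * c * bieleckiWeight k a b := by
  have pointwise : ∀ s ∈ Ioc a b,
      ‖V s (γ s) - V s (γ' s)‖ ≤ c * (k s * bieleckiWeight k a s) := by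
    intro s hs
    have hs' : s ∈ Icc a b := Ioc_subset_Icc_self hs
    calc ‖V s (γ s) - V s (γ' s)‖ ≤ k s * ‖γ s - γ' s‖ :=
          (hV s hs').norm_sub_le (hγ s hs') (hγ' s hs')
      _ ≤ k s * (c * bieleckiWeight k a s) := by gcongr; exact hγγ' s hs'
      _ = c * (k s * bieleckiWeight k a s) := by ring
  rw [← intervalIntegral.integral_sub hVγ hVγ']
  calc ‖∫ s in a..b, (V s (γ s) - V s (γ' s))‖
      ≤ ∫ s in a..b, c * (k s * bieleckiWeight k a s) :=
        intervalIntegral.norm_integral_le_of_norm_le hab (Eventually.of_forall pointwise)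
          ((hk.mul_continuousOn (continuousOn_bieleckiWeight hk)).const_mul c)
    _ = c * ∫ s in a..b, k s * bieleckiWeight k a s := intervalIntegral.integral_const_mul _ _
    _ ≤ c * (1 / 2 * bieleckiWeight k a b) := by
        gcongr
        exact integral_mul_bieleckiWeight_le hab hk
    _ = 1 / 2 * c * bieleckiWeight k a b := by ring

end BieleckiWeight

section CaratheodorySolution

variable {E : Type*} [NormedAddCommGroup E] [NormedSpace ℝ E]

/-- `γ` solves the initial value problem `γ' = V(t, γ)`, `γ(0) = x` on `[0,T]` in Carathéodory's
sense. Since only the integrated equation is imposed, `V` may be merely integrable in time. -/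
def IsCaratheodorySolution (V : ℝ → E → E) (x : E) (T : ℝ) (γ : ℝ → E) : Prop :=
  ContinuousOn γ (Icc 0 T) ∧ ∀ t ∈ Icc 0 T, γ t = x + ∫ s in (0 : ℝ)..t, V s (γ s)

variable {V : ℝ → E → E} {T : ℝ}

section PicardMap

variable (hT : 0 ≤ T) (x : E) (hV : ∀ γ : ℝ → E, ContinuousOn γ (Icc 0 T) →
  IntervalIntegrable (fun s => V s (γ s)) volume 0 T)

/-- The Picard operator `γ ↦ x + ∫₀ᵗ V(s, γ(s)) ds`, whose fixed points are the Carathéodory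
solutions. Curves on `[0,T]` are extended to `ℝ` by constants, so that `V s` can be applied along
them inside an interval integral. -/
def picardMap (γ : C(Icc 0 T, E)) : C(Icc 0 T, E) where
  toFun t := x + ∫ s in (0 : ℝ)..t, V s (IccExtend hT γ s)
  continuous_toFun := by
    have := intervalIntegral.continuousOn_primitive_interval'
      (hV (IccExtend hT γ) γ.continuous.Icc_extend'.continuousOn) left_mem_uIcc
    rw [uIcc_of_le hT] at this
    exact continuous_const.add this.domRestrict

lemma picardMap_domRestrict {γ : ℝ → E} (hγ : ContinuousOn γ (Icc 0 T)) (t : Icc 0 T) :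
    picardMap hT x hV ⟨_, hγ.domRestrict⟩ t = x + ∫ s in (0 : ℝ)..t, V s (γ s) := by
  refine congrArg (x + ·) (intervalIntegral.integral_congr fun s hs => ?_)
  rw [uIcc_of_le t.2.1] at hs
  simp [IccExtend_of_mem _ _ (Icc_subset_Icc_right t.2.2 hs)]

lemma isCaratheodorySolution_of_picardMap_eq {γ : C(Icc 0 T, E)} (hγ : picardMap hT x hV γ = γ) :
    IsCaratheodorySolution V x T (IccExtend hT γ) := by
  refine ⟨γ.continuous.Icc_extend'.continuousOn, fun t ht => ?_⟩
  rw [IccExtend_of_mem _ _ ht]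
  exact (DFunLike.congr_fun hγ ⟨t, ht⟩).symm

lemma norm_picardMap_sub_picardMap_le {k : ℝ → ℝ≥0} {S : ℝ → Set E}
    (hk : IntervalIntegrable (fun s => (k s : ℝ)) volume 0 T)
    (hVk : ∀ s ∈ Icc 0 T, LipschitzOnWith (k s) (V s) (S s)) {γ γ' : C(Icc 0 T, E)}
    (hγ : ∀ t : Icc 0 T, γ t ∈ S t) (hγ' : ∀ t : Icc 0 T, γ' t ∈ S t) {c : ℝ}
    (hc : ∀ t : Icc 0 T, ‖γ t - γ' t‖ ≤ c * bieleckiWeight k 0 t) (t : Icc 0 T) :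
    ‖picardMap hT x hV γ t - picardMap hT x hV γ' t‖ ≤ 1 / 2 * c * bieleckiWeight k 0 t := by
  have hc0 : 0 ≤ c :=
    nonneg_of_mul_nonneg_left ((norm_nonneg _).trans (hc t)) (bieleckiWeight_pos _)
  have hsub : uIcc 0 (t : ℝ) ⊆ uIcc 0 T :=
    uIcc_subset_uIcc left_mem_uIcc (by rw [uIcc_of_le hT]; exact t.2)
  have hmem : ∀ s ∈ Icc 0 (t : ℝ), s ∈ Icc 0 T := fun s hs => Icc_subset_Icc_right t.2.2 hs
  have hint (η : C(Icc 0 T, E)) :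
      IntervalIntegrable (fun s => V s (IccExtend hT η s)) volume 0 t :=
    (hV _ η.continuous.Icc_extend'.continuousOn).mono_set hsub
  change ‖(x + _) - (x + _)‖ ≤ _
  rw [add_sub_add_left_eq_sub]
  refine norm_integral_sub_integral_le_bieleckiWeight t.2.1 hc0 (hk.mono_set hsub)
    (fun s hs => hVk s (hmem s hs)) (fun s hs => ?_) (fun s hs => ?_) (hint γ) (hint γ')
    (fun s hs => ?_)
  · simpa only [IccExtend_of_mem _ _ (hmem s hs)] using hγ ⟨s, hmem s hs⟩
  · simpa only [IccExtend_of_mem _ _ (hmem s hs)] using hγ' ⟨s, hmem s hs⟩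
  · simpa only [IccExtend_of_mem _ _ (hmem s hs)] using hc ⟨s, hmem s hs⟩

end PicardMap

theorem exists_isCaratheodorySolution_of_approx [CompleteSpace E] (hT : 0 ≤ T) (x : E)
    (hV : ∀ γ : ℝ → E, ContinuousOn γ (Icc 0 T) →
      IntervalIntegrable (fun s => V s (γ s)) volume 0 T)
    {γ₀ : ℝ → E} {k : ℝ → ℝ≥0} {r : ℝ} (hr : 0 ≤ r) (hγ₀ : ContinuousOn γ₀ (Icc 0 T))
    (hk : IntervalIntegrable (fun s => (k s : ℝ)) volume 0 T)
    (hVk : ∀ s ∈ Icc 0 T, LipschitzOnWith (k s) (V s) (closedBall (γ₀ s) r))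
    (hdefect : ∀ t ∈ Icc 0 T, ‖x + (∫ s in (0 : ℝ)..t, V s (γ₀ s)) - γ₀ t‖ ≤
      1 / 2 * (r / bieleckiWeight k 0 T)) :
    ∃ γ, IsCaratheodorySolution V x T γ ∧ ∀ t ∈ Icc 0 T, γ t ∈ closedBall (γ₀ t) r := by
  set ρ := r / bieleckiWeight k 0 T
  have hρ0 : 0 ≤ ρ := div_nonneg hr (bieleckiWeight_pos T).le
  have weight_mono := monotoneOn_bieleckiWeight hT hk
  have tube {y : E} {t : ℝ} (ht : t ∈ Icc 0 T) (hy : ‖y - γ₀ t‖ ≤ ρ * bieleckiWeight k 0 t) :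
      y ∈ closedBall (γ₀ t) r := by
    rw [mem_closedBall_iff_norm]
    calc ‖y - γ₀ t‖ ≤ ρ * bieleckiWeight k 0 t := hy
      _ ≤ ρ * bieleckiWeight k 0 T := by gcongr; exact weight_mono ht (right_mem_Icc.2 hT) ht.2
      _ = r := div_mul_cancel₀ _ (bieleckiWeight_pos T).ne'
  let w : C(Icc 0 T, ℝ) :=
    ⟨_, ((continuousOn_bieleckiWeight hk).mono (uIcc_of_le hT).ge).domRestrict⟩
  have moves (t : Icc 0 T) : ‖picardMap hT x hV ⟨_, hγ₀.domRestrict⟩ t - γ₀ t‖ ≤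
      (1 - (1 / 2 : ℝ≥0)) * ρ * w t := by
    have one_le_weight : 1 ≤ bieleckiWeight k 0 t :=
      bieleckiWeight_self.symm.trans_le (weight_mono (left_mem_Icc.2 hT) t.2 t.2.1)
    rw [picardMap_domRestrict hT x hV hγ₀]
    calc _ ≤ 1 / 2 * ρ := hdefect t t.2
      _ ≤ 1 / 2 * ρ * bieleckiWeight k 0 t := le_mul_of_one_le_right (by positivity) one_le_weight
      _ = _ := by norm_num [w]
  obtain ⟨γ, fixed, hγ⟩ := exists_fixedPoint_of_weighted_contraction (w := w)
    (fun t => bieleckiWeight_pos _) (NNReal.half_lt_self one_ne_zero) hρ0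
    (fun η ζ hη hζ c hc t => by
      simpa [w] using norm_picardMap_sub_picardMap_le hT x hV hk hVk (fun s => tube s.2 (hη s))
        (fun s => tube s.2 (hζ s)) hc t) moves
  refine ⟨_, isCaratheodorySolution_of_picardMap_eq hT x hV fixed, fun t ht => tube ht ?_⟩
  rw [IccExtend_of_mem _ _ ht]
  exact hγ ⟨t, ht⟩

end CaratheodorySolution

theorem exists_forall_lipschitzOnWith_closedBall {X Y : Type*} [PseudoMetricSpace X]
    [PseudoMetricSpace Y] {g : X → Y} (hg : LocallyLipschitz g) {S : Set X} (hS : IsCompact S) :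
    ∃ r > 0, ∃ L, ∀ x ∈ S, LipschitzOnWith L g (closedBall x r) := by
  refine hS.induction_on (p := fun S => ∃ r > 0, ∃ L, ∀ x ∈ S, LipschitzOnWith L g (closedBall x r))
    ⟨1, one_pos, 0, by simp⟩
    (fun s t hst ⟨r, hr, L, hL⟩ => ⟨r, hr, L, fun x hx => hL x (hst hx)⟩) ?_ ?_
  · rintro s t ⟨r, hr, L, hL⟩ ⟨r', hr', L', hL'⟩
    refine ⟨min r r', lt_min hr hr', max L L', ?_⟩
    rintro x (hx | hx)
    · exact ((hL x hx).mono (closedBall_subset_closedBall (min_le_left _ _))).weaken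
        (le_max_left _ _)
    · exact ((hL' x hx).mono (closedBall_subset_closedBall (min_le_right _ _))).weaken
        (le_max_right _ _)
  · intro x _
    obtain ⟨L, t, ht, hL⟩ := hg x
    obtain ⟨r, hr, hrt⟩ := nhds_basis_closedBall.mem_iff.1 ht
    refine ⟨closedBall x (r / 2), mem_nhdsWithin_of_mem_nhds (closedBall_mem_nhds x (half_pos hr)),
      r / 2, half_pos hr, L, fun y hy => hL.mono ?_⟩
    exact (closedBall_subset_closedBall' (by grind [mem_closedBall])).trans hrt

section AffineControl

variable {E F : Type*} [NormedAddCommGroup E] [NormedSpace ℝ E] [NormedAddCommGroup F]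
  [NormedSpace ℝ F]

/-- The time-dependent field `f(y) + A(y) u(s)` of the control-affine system with drift `f` and
control operators `A`, driven by the control `u`. -/
def affineField (f : E → E) (A : E → F →L[ℝ] E) (u : ℝ → F) (s : ℝ) (y : E) : E :=
  f y + A y (u s)

variable {f : E → E} {A : E → F →L[ℝ] E}

lemma intervalIntegrable_affineField_comp {u : ℝ → F} {γ : ℝ → E} {a b : ℝ} (hf : Continuous f)
    (hA : Continuous A) (hu : IntervalIntegrable u volume a b) (hγ : ContinuousOn γ (uIcc a b)) :
    IntervalIntegrable (fun s => affineField f A u s (γ s)) volume a b := by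
  obtain ⟨C, hC⟩ := isCompact_uIcc.exists_bound_of_continuousOn (hA.comp_continuousOn hγ)
  refine (hf.comp_continuousOn hγ).intervalIntegrable.add ?_
  rw [intervalIntegrable_iff'] at hu ⊢
  exact (ContinuousLinearMap.id ℝ (F →L[ℝ] E)).integrable_of_bilin_of_bdd_left C
    ((hA.comp_continuousOn hγ).aestronglyMeasurable_of_isCompact isCompact_uIcc measurableSet_uIcc)
    (ae_restrict_of_forall_mem measurableSet_uIcc hC) hu

lemma lipschitzOnWith_affineField {L : ℝ≥0} {S : Set E} (hf : LipschitzOnWith L f S)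
    (hA : LipschitzOnWith L A S) (u : ℝ → F) (s : ℝ) :
    LipschitzOnWith (L * (1 + ‖u s‖₊)) (affineField f A u s) S := by
  refine LipschitzOnWith.of_dist_le_mul fun y hy z hz => ?_
  simp only [dist_eq_norm]
  calc ‖affineField f A u s y - affineField f A u s z‖
      = ‖(f y - f z) + (A y - A z) (u s)‖ := by
        rw [affineField, affineField, sub_apply, add_sub_add_comm]
    _ ≤ L * ‖y - z‖ + L * ‖y - z‖ * ‖u s‖ :=
        norm_add_le_of_le (hf.norm_sub_le hy hz)
          (ContinuousLinearMap.le_of_opNorm_le _ (hA.norm_sub_le hy hz) _)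
    _ = ↑(L * (1 + ‖u s‖₊)) * ‖y - z‖ := by
        push_cast
        ring

lemma norm_defect_affineField_le {x : E} {T M : ℝ} {u₀ u : ℝ → F} {γ₀ : ℝ → E}
    (hf : Continuous f) (hA : Continuous A) (hu₀ : IntervalIntegrable u₀ volume 0 T)
    (hu : IntervalIntegrable u volume 0 T)
    (hγ₀ : IsCaratheodorySolution (affineField f A u₀) x T γ₀)
    (hM : ∀ s ∈ Icc 0 T, ‖A (γ₀ s)‖ ≤ M) {t : ℝ} (ht : t ∈ Icc 0 T) :
    ‖x + (∫ s in (0 : ℝ)..t, affineField f A u s (γ₀ s)) - γ₀ t‖ ≤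
      M * ∫ s in (0 : ℝ)..T, ‖u s - u₀ s‖ := by
  have hT : 0 ≤ T := ht.1.trans ht.2
  have hM0 : 0 ≤ M := (norm_nonneg _).trans (hM t ht)
  have hsub : uIcc 0 t ⊆ uIcc 0 T :=
    uIcc_subset_uIcc left_mem_uIcc (by rwa [uIcc_of_le hT])
  have hcont : ContinuousOn γ₀ (uIcc 0 t) := hγ₀.1.mono (hsub.trans_eq (uIcc_of_le hT))
  have hdiff := (hu.sub hu₀).norm
  have hdefect : x + (∫ s in (0 : ℝ)..t, affineField f A u s (γ₀ s)) - γ₀ t =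
      ∫ s in (0 : ℝ)..t, A (γ₀ s) (u s - u₀ s) := by
    rw [hγ₀.2 t ht, add_sub_add_left_eq_sub, ← intervalIntegral.integral_sub
      (intervalIntegrable_affineField_comp hf hA (hu.mono_set hsub) hcont)
      (intervalIntegrable_affineField_comp hf hA (hu₀.mono_set hsub) hcont)]
    simp only [affineField, add_sub_add_left_eq_sub, map_sub]
  calc ‖x + (∫ s in (0 : ℝ)..t, affineField f A u s (γ₀ s)) - γ₀ t‖
      = ‖∫ s in (0 : ℝ)..t, A (γ₀ s) (u s - u₀ s)‖ := by rw [hdefect]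
    _ ≤ ∫ s in (0 : ℝ)..t, M * ‖u s - u₀ s‖ :=
        intervalIntegral.norm_integral_le_of_norm_le ht.1
          (Eventually.of_forall fun s hs =>
            (A (γ₀ s)).le_of_opNorm_le (hM s ⟨hs.1.le, hs.2.trans ht.2⟩) _)
          ((hdiff.mono_set hsub).const_mul M)
    _ = M * ∫ s in (0 : ℝ)..t, ‖u s - u₀ s‖ := intervalIntegral.integral_const_mul _ _
    _ ≤ M * ∫ s in (0 : ℝ)..T, ‖u s - u₀ s‖ := by
        gcongr
        exact intervalIntegral.integral_mono_interval le_rfl ht.1 ht.2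
          (Eventually.of_forall fun s => norm_nonneg _) hdiff

lemma IsCaratheodorySolution.exists_of_integral_norm_sub_le [CompleteSpace E] {x : E}
    {T M r : ℝ} {L : ℝ≥0} {u₀ u : ℝ → F} {γ₀ : ℝ → E} (hT : 0 ≤ T) (hr : 0 ≤ r)
    (hf : Continuous f) (hA : Continuous A)
    (hu₀ : IntervalIntegrable u₀ volume 0 T) (hu : IntervalIntegrable u volume 0 T)
    (hγ₀ : IsCaratheodorySolution (affineField f A u₀) x T γ₀)
    (hM : ∀ s ∈ Icc 0 T, ‖A (γ₀ s)‖ ≤ M)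
    (hfL : ∀ s ∈ Icc 0 T, LipschitzOnWith L f (closedBall (γ₀ s) r))
    (hAL : ∀ s ∈ Icc 0 T, LipschitzOnWith L A (closedBall (γ₀ s) r))
    (hclose : M * (∫ s in (0 : ℝ)..T, ‖u s - u₀ s‖) ≤ 1 / 2 * (r / Real.exp
      (2 * L * (T + ((∫ s in (0 : ℝ)..T, ‖u₀ s‖) + ∫ s in (0 : ℝ)..T, ‖u s - u₀ s‖))))) :
    ∃ γ, IsCaratheodorySolution (affineField f A u) x T γ ∧
      ∀ t ∈ Icc 0 T, γ t ∈ closedBall (γ₀ t) r := by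
  have norm_le : ∫ s in (0 : ℝ)..T, ‖u s‖ ≤
      (∫ s in (0 : ℝ)..T, ‖u₀ s‖) + ∫ s in (0 : ℝ)..T, ‖u s - u₀ s‖ := by
    rw [← intervalIntegral.integral_add hu₀.norm (hu.sub hu₀).norm]
    exact intervalIntegral.integral_mono hT hu.norm (hu₀.norm.add (hu.sub hu₀).norm)
      fun s => norm_le_norm_add_norm_sub' _ _
  refine exists_isCaratheodorySolution_of_approx (k := fun s => L * (1 + ‖u s‖₊)) hT x
    (fun γ hγ => intervalIntegrable_affineField_comp hf hA hu (by rwa [uIcc_of_le hT])) hr hγ₀.1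
    ((intervalIntegrable_const.add hu.norm).const_mul L)
    (fun s hs => lipschitzOnWith_affineField (hfL s hs) (hAL s hs) u s) fun t ht => ?_
  rw [bieleckiWeight_const_mul_one_add_nnnorm hu, sub_zero]
  calc _ ≤ M * ∫ s in (0 : ℝ)..T, ‖u s - u₀ s‖ :=
        norm_defect_affineField_le hf hA hu₀ hu hγ₀ hM ht
    _ ≤ _ := hclose
    _ ≤ _ := by gcongr

theorem IsCaratheodorySolution.eventually_exists_of_tendsto [CompleteSpace E] {x : E} {T : ℝ}
    (hT : 0 ≤ T) (hf : LocallyLipschitz f) (hA : LocallyLipschitz A) {u₀ : ℝ → F} {γ₀ : ℝ → E}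
    (hu₀ : IntervalIntegrable u₀ volume 0 T)
    (hγ₀ : IsCaratheodorySolution (affineField f A u₀) x T γ₀) {ι : Type*} {l : Filter ι}
    {u : ι → ℝ → F} (hu : ∀ i, IntervalIntegrable (u i) volume 0 T)
    (hlim : Tendsto (fun i => ∫ s in (0 : ℝ)..T, ‖u i s - u₀ s‖) l (𝓝 0)) :
    ∀ᶠ i in l, ∃ γ, IsCaratheodorySolution (affineField f A (u i)) x T γ := by
  obtain ⟨r, hr, L, hL⟩ := exists_forall_lipschitzOnWith_closedBall (hf.prodMk hA)
    (isCompact_Icc.image_of_continuousOn hγ₀.1)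
  obtain ⟨M, hM⟩ :=
    isCompact_Icc.exists_bound_of_continuousOn (hA.continuous.comp_continuousOn hγ₀.1)
  have hfL (s) (hs : s ∈ Icc 0 T) : LipschitzOnWith L f (closedBall (γ₀ s) r) := by
    have := LipschitzWith.prod_fst.comp_lipschitzOnWith (hL _ (mem_image_of_mem _ hs))
    rwa [one_mul] at this
  have hAL (s) (hs : s ∈ Icc 0 T) : LipschitzOnWith L A (closedBall (γ₀ s) r) := by
    have := LipschitzWith.prod_snd.comp_lipschitzOnWith (hL _ (mem_image_of_mem _ hs))
    rwa [one_mul] at this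
  have small : ∀ᶠ δ in 𝓝 (0 : ℝ), M * δ < 1 / 2 * (r / Real.exp
      (2 * L * (T + ((∫ s in (0 : ℝ)..T, ‖u₀ s‖) + δ)))) := by
    refine ContinuousAt.eventually_lt (by fun_prop) ?_ (by rw [mul_zero]; positivity)
    fun_prop (disch := positivity)
  filter_upwards [hlim.eventually small] with i hi
  obtain ⟨γ, hγ, -⟩ := hγ₀.exists_of_integral_norm_sub_le hT hr.le hf.continuous hA.continuous
    hu₀ (hu i) hM hfL hAL hi.le
  exact ⟨γ, hγ⟩

end AffineControl

section ControlOperator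

variable {ι E : Type*} [Fintype ι] [NormedAddCommGroup E] [NormedSpace ℝ E]

/-- The operator `v ↦ ∑ᵢ vᵢ Xᵢ(y)` through which a control with values in `ℝᵈ` acts at the point
`y`, so that the system with fields `X₀, X₁, …, X_d` is `affineField X₀ (controlOperator X)`. -/
def controlOperator (X : ι → E → E) (y : E) : EuclideanSpace ℝ ι →L[ℝ] E :=
  ∑ i, (EuclideanSpace.proj i).smulRight (X i y)

lemma locallyLipschitz_controlOperator {X : ι → E → E} (hX : ∀ i, ContDiff ℝ 1 (X i)) :
    LocallyLipschitz (controlOperator X) :=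
  ContDiff.locallyLipschitz (𝕂 := ℝ) (ContDiff.sum fun i _ => contDiff_const.smulRight (hX i))

lemma affineField_controlOperator (f : E → E) (X : ι → E → E) (u : ℝ → EuclideanSpace ℝ ι)
    (s : ℝ) (y : E) :
    affineField f (controlOperator X) u s y = f y + ∑ i, u s i • X i y := by
  simp [affineField, controlOperator]

end ControlOperator

lemma tendsto_integral_norm_sub_nhds {α F : Type*} [MeasurableSpace α] [NormedAddCommGroup F]
    {μ : Measure α} [IsFiniteMeasure μ] {p : ℝ≥0∞} [hp : Fact (1 ≤ p)] (u₀ : Lp F p μ) :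
    Tendsto (fun u : Lp F p μ => ∫ s, ‖u s - u₀ s‖ ∂μ) (𝓝 u₀) (𝓝 0) := by
  have lim_p : Tendsto (fun u : Lp F p μ => eLpNorm (u - u₀ : α → F) p μ) (𝓝 u₀) (𝓝 0) :=
    (Lp.tendsto_Lp_iff_tendsto_eLpNorm' id u₀).1 tendsto_id
  have exponent_nonneg : 0 ≤ 1 / (1 : ℝ≥0∞).toReal - 1 / p.toReal := by
    rw [sub_nonneg, one_div, one_div, ← ENNReal.toReal_inv, ← ENNReal.toReal_inv]
    exact ENNReal.toReal_mono (by simp) (ENNReal.inv_le_inv.2 hp.out)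
  have lim_mul := ENNReal.Tendsto.mul_const lim_p
    (Or.inr (ENNReal.rpow_ne_top_of_nonneg exponent_nonneg (measure_ne_top μ univ)))
  rw [zero_mul] at lim_mul
  have measurable_sub (u : Lp F p μ) : AEStronglyMeasurable (u - u₀ : α → F) μ :=
    (Lp.aestronglyMeasurable u).sub (Lp.aestronglyMeasurable u₀)
  have lim_one : Tendsto (fun u : Lp F p μ => eLpNorm (u - u₀ : α → F) 1 μ) (𝓝 u₀) (𝓝 0) :=
    tendsto_of_tendsto_of_tendsto_of_le_of_le tendsto_const_nhds lim_mul (fun _ => zero_le)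
      fun u => eLpNorm_le_eLpNorm_mul_rpow_measure_univ hp.out (measurable_sub u)
  refine ((ENNReal.tendsto_toReal ENNReal.zero_ne_top).comp lim_one).congr fun u => ?_
  rw [Function.comp_apply, eLpNorm_one_eq_lintegral_enorm,
    ← integral_norm_eq_lintegral_enorm (measurable_sub u)]
  rfl

theorem stmt6_general {E F : Type*} [NormedAddCommGroup E] [NormedSpace ℝ E] [CompleteSpace E]
    [NormedAddCommGroup F] [NormedSpace ℝ F] {p : ℝ≥0∞} [Fact (1 ≤ p)] {T : ℝ} (hT : 0 ≤ T)
    (x : E) {f : E → E} {A : E → F →L[ℝ] E} (hf : LocallyLipschitz f) (hA : LocallyLipschitz A) :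
    IsOpen {u : Lp F p (volume.restrict (Icc 0 T)) |
      ∃ γ, IsCaratheodorySolution (affineField f A u) x T γ} := by
  have integrable (u : Lp F p (volume.restrict (Icc 0 T))) : IntervalIntegrable u volume 0 T := by
    rw [intervalIntegrable_iff_integrableOn_Icc_of_le hT]
    exact (Lp.memLp u).integrable Fact.out
  refine isOpen_iff_eventually.2 fun u₀ ⟨γ₀, hγ₀⟩ =>
    hγ₀.eventually_exists_of_tendsto hT hf hA (integrable u₀) integrable ?_
  simp only [intervalIntegral.integral_of_le hT, ← integral_Icc_eq_integral_Ioc]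
  exact tendsto_integral_norm_sub_nhds u₀

/-- the domain of the endpoint map — the set of controls
`u ∈ L^p([0,T],ℝ^d)` whose trajectory starting at `x` exists on all of `[0,T]` —
is open in `L^p([0,T],ℝ^d)`. -/
theorem stmt6 (n d : ℕ) (p : ℝ) (hp : 1 ≤ p) [Fact (1 ≤ ENNReal.ofReal p)]
    (T : ℝ) (hT : 0 < T) (x : EuclideanSpace ℝ (Fin n))
    (X0 : EuclideanSpace ℝ (Fin n) → EuclideanSpace ℝ (Fin n))
    (X : Fin d → EuclideanSpace ℝ (Fin n) → EuclideanSpace ℝ (Fin n))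
    (hX0smooth : ContDiff ℝ (⊤ : ℕ∞) X0)
    (hXsmooth : ∀ i, ContDiff ℝ (⊤ : ℕ∞) (X i)) :
    IsOpen {u : Lp (EuclideanSpace ℝ (Fin d)) (ENNReal.ofReal p)
        (volume.restrict (Set.Icc (0:ℝ) T)) |
      ∃ γ : ℝ → EuclideanSpace ℝ (Fin n), IsTrajectory X0 X x T (⇑u) γ} := by
  simpa only [IsTrajectory, IsCaratheodorySolution, affineField_controlOperator] using
    stmt6_general hT.le x (hX0smooth.of_le (by simp)).locallyLipschitz
      (locallyLipschitz_controlOperator fun i => (hXsmooth i).of_le (by simp))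
end
end

section
/- Fix n, d ∈ ℕ, 1 < p < ∞, T > 0, x ∈ ℝ^n, and smooth vector fields X_0, X_1, …, X_d : ℝ^n → ℝ^n that are bounded and have bounded first and second derivatives. For w ∈ L^p([0,T], ℝ^d), let γ_w denote the trajectory of w starting at x, let A_w(s) = DX_0(γ_w(s)) + Σ_{i=1}^d w_i(s)·DX_i(γ_w(s)), and let N_w : [0,T] → ℝ^{n×n} be the unique continuous matrix-valued function satisfying N_w(t) = I + ∫_t^T N_w(s)A_w(s) ds for all t ∈ [0,T]. If a sequence u_n converges weakly to u in L^p([0,T], ℝ^d), then N_{u_n} converges to N_u uniformly on [0,T]. -/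
open MeasureTheory Set Filter Topology

noncomputable section

open scoped NNReal ENNReal

/-! For a fixed continuous `F`, the operators `v ↦ ∫ s in 0..t, F s (v s)` on `L^p` depend
continuously on `t` in operator norm, because the truncations `F · 𝟙_{s ≤ t}` do so in `L^q`, and
`q < ∞`. Hence along a weakly convergent, thus bounded, sequence of controls they converge
uniformly in `t`, by equicontinuity. If `y_k` and `y'` solve equations affine in the controls, then
`y_k - y'` is such a uniformly small term (with `F` the input field along `y'`) plus an integral
of size at most `K ∫ (1 + |u_k|) |y_k - y'|`, and Gronwall's inequality with the weights
`1 + |u_k|`, bounded in `L¹`, gives `y_k → y'` uniformly. This applies first to the trajectories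
and then, the coefficients `DX_i(γ_k)` now being uniformly convergent, to `N_k`. -/

section Gronwall

variable {a b : ℝ}

theorem lipschitzOnWith_comp_absolutelyContinuousOnInterval {f g : ℝ → ℝ} {K : ℝ≥0} {s : Set ℝ}
    (hg : LipschitzOnWith K g s) (hf : AbsolutelyContinuousOnInterval f a b)
    (hfs : MapsTo f (uIcc a b) s) : AbsolutelyContinuousOnInterval (fun x ↦ g (f x)) a b := by
  unfold AbsolutelyContinuousOnInterval at hf ⊢
  refine squeeze_zero' (Eventually.of_forall fun _ ↦ Finset.sum_nonneg fun _ _ ↦ dist_nonneg) ?_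
    (by simpa using hf.const_mul (K : ℝ))
  filter_upwards [mem_inf_of_right (mem_principal_self _)] with I hI
  rw [Finset.mul_sum]
  exact Finset.sum_le_sum fun i hi ↦
    hg.dist_le_mul _ (hfs (hI.1 i hi).1) _ (hfs (hI.1 i hi).2)

theorem le_of_absolutelyContinuousOnInterval_of_ae_deriv_nonpos {f : ℝ → ℝ} (hab : a ≤ b)
    (hf : AbsolutelyContinuousOnInterval f a b)
    (hf' : ∀ᵐ s ∂volume.restrict (Icc a b), deriv f s ≤ 0) : f b ≤ f a := by
  rw [← sub_nonpos, ← hf.integral_deriv_eq_sub, intervalIntegral.integral_of_le hab,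
    ← integral_Icc_eq_integral_Ioc]
  exact integral_nonpos_of_ae hf'

theorem lipschitzOnWith_exp_Iic_zero : LipschitzOnWith 1 Real.exp (Iic 0) :=
  (convex_Iic 0).lipschitzOnWith_of_nnnorm_deriv_le (fun _ _ ↦ Real.differentiableAt_exp)
    fun s hs ↦ by
      rw [Real.deriv_exp, ← NNReal.coe_le_coe, coe_nnnorm, Real.norm_of_nonneg (Real.exp_nonneg s)]
      exact Real.exp_le_one_iff.2 hs

theorem le_mul_exp_integral_of_le_add_integral {y w : ℝ → ℝ} {ε : ℝ} (hab : a ≤ b)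
    (hw : IntervalIntegrable w volume a b) (hw0 : ∀ s, 0 ≤ w s)
    (hwy : IntervalIntegrable (fun s ↦ w s * y s) volume a b)
    (h : ∀ t ∈ Icc a b, y t ≤ ε + ∫ s in a..t, w s * y s) :
    y b ≤ ε * Real.exp (∫ s in a..b, w s) := by
  set W : ℝ → ℝ := fun t ↦ ∫ s in a..t, w s
  set R : ℝ → ℝ := fun t ↦ ε + ∫ s in a..t, w s * y s
  have hR : AbsolutelyContinuousOnInterval R a b :=
    (LipschitzWith.const ε).lipschitzOnWith.absolutelyContinuousOnInterval.fun_add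
      (hwy.absolutelyContinuousOnInterval_intervalIntegral left_mem_uIcc)
  have hW : AbsolutelyContinuousOnInterval W a b :=
    hw.absolutelyContinuousOnInterval_intervalIntegral left_mem_uIcc
  have hexpW : AbsolutelyContinuousOnInterval (fun t ↦ Real.exp (-W t)) a b := by
    refine lipschitzOnWith_comp_absolutelyContinuousOnInterval (f := fun t ↦ -W t)
      lipschitzOnWith_exp_Iic_zero hW.fun_neg fun t ht ↦ ?_
    rw [uIcc_of_le hab] at ht
    exact neg_nonpos.2 (intervalIntegral.integral_nonneg ht.1 fun s _ ↦ hw0 s)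
  have hderiv : ∀ᵐ s ∂volume.restrict (Icc a b), deriv (fun t ↦ Real.exp (-W t) * R t) s ≤ 0 := by
    rw [ae_restrict_iff' measurableSet_Icc]
    filter_upwards [hw.ae_hasDerivAt_integral, hwy.ae_hasDerivAt_integral] with s hWs hRs hs
    rw [uIcc_of_le hab] at hWs hRs
    have hWR := (hWs hs a (left_mem_Icc.2 hab)).fun_neg.exp.fun_mul
      ((hRs hs a (left_mem_Icc.2 hab)).const_add ε)
    calc deriv (fun t ↦ Real.exp (-W t) * R t) s
        = -(Real.exp (-W s) * (w s * (R s - y s))) := by rw [hWR.deriv]; ring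
      _ ≤ 0 := neg_nonpos.2 <| mul_nonneg (Real.exp_nonneg _) <|
          mul_nonneg (hw0 s) (sub_nonneg.2 (h s hs))
  have hmono : Real.exp (-W b) * R b ≤ ε := by
    simpa [W, R] using
      le_of_absolutelyContinuousOnInterval_of_ae_deriv_nonpos hab (hexpW.fun_mul hR) hderiv
  calc y b ≤ R b := h b (right_mem_Icc.2 hab)
    _ ≤ ε * Real.exp (W b) := by
      rwa [Real.exp_neg, inv_mul_le_iff₀ (Real.exp_pos _), mul_comm] at hmono

theorem le_mul_exp_abs_integral_of_le_add_abs_integral {y w : ℝ → ℝ} {ε : ℝ}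
    (hw : IntervalIntegrable w volume a b) (hw0 : ∀ s, 0 ≤ w s)
    (hy : ContinuousOn y (uIcc a b)) (hy0 : ∀ s, 0 ≤ y s)
    (h : ∀ t ∈ uIcc a b, y t ≤ ε + |∫ s in a..t, w s * y s|) :
    y b ≤ ε * Real.exp |∫ s in a..b, w s| := by
  have hwy : IntervalIntegrable (fun s ↦ w s * y s) volume a b := hw.mul_continuousOn hy
  have hwy0 : ∀ s, 0 ≤ w s * y s := fun s ↦ mul_nonneg (hw0 s) (hy0 s)
  rcases le_total a b with hab | hba
  · rw [uIcc_of_le hab] at h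
    rw [abs_of_nonneg (intervalIntegral.integral_nonneg hab fun s _ ↦ hw0 s)]
    refine le_mul_exp_integral_of_le_add_integral hab hw hw0 hwy fun t ht ↦ (h t ht).trans_eq ?_
    rw [abs_of_nonneg (intervalIntegral.integral_nonneg ht.1 fun s _ ↦ hwy0 s)]
  · have habs : ∀ f : ℝ → ℝ, (∀ s, 0 ≤ f s) → ∀ t ≤ a,
        |∫ s in a..t, f s| = ∫ s in -a..-t, f (-s) := fun f hf t ht ↦ by
      rw [intervalIntegral.integral_comp_neg, neg_neg, neg_neg, intervalIntegral.integral_symm,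
        abs_neg, abs_of_nonneg (intervalIntegral.integral_nonneg ht fun s _ ↦ hf s)]
    have hreflect : ∀ f : ℝ → ℝ, IntervalIntegrable f volume a b →
        IntervalIntegrable (fun s ↦ f (-s)) volume (-a) (-b) := fun f hf ↦ by
      simpa using (IntervalIntegrable.iff_comp_neg).1 hf
    rw [uIcc_of_ge hba] at h
    rw [habs w hw0 b hba]
    simpa using le_mul_exp_integral_of_le_add_integral (y := fun s ↦ y (-s)) (neg_le_neg hba)
      (hreflect w hw) (fun s ↦ hw0 (-s)) (hreflect _ hwy) fun t ht ↦ by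
        have hta : -t ≤ a := neg_le.1 ht.1
        simpa [habs _ hwy0 _ hta] using h (-t) ⟨le_neg.1 ht.2, hta⟩

variable {E : Type*} [NormedAddCommGroup E] [NormedSpace ℝ E]

theorem norm_le_mul_exp_of_norm_sub_integral_le {δ q : ℝ → E} {w : ℝ → ℝ} {ε η : ℝ} (hη : 0 ≤ η)
    (hδ : ContinuousOn δ (uIcc a b)) (hw : IntervalIntegrable w volume a b) (hw0 : ∀ s, 0 ≤ w s)
    (hδq : ∀ t ∈ uIcc a b, ‖δ t - ∫ s in a..t, q s‖ ≤ ε)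
    (hq : ∀ s ∈ uIcc a b, ‖q s‖ ≤ w s * (‖δ s‖ + η)) :
    ‖δ b‖ ≤ (ε + η) * Real.exp |∫ s in a..b, w s| := by
  have hcont : ContinuousOn (fun s ↦ ‖δ s‖ + η) (uIcc a b) := hδ.norm.add continuousOn_const
  have hint : ∀ t ∈ uIcc a b, IntervalIntegrable (fun s ↦ w s * (‖δ s‖ + η)) volume a t :=
    fun t ht ↦ (hw.mul_continuousOn hcont).mono_set (uIcc_subset_uIcc_left ht)
  have hbound : ∀ t ∈ uIcc a b, ‖∫ s in a..t, q s‖ ≤ |∫ s in a..t, w s * (‖δ s‖ + η)| :=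
    fun t ht ↦ intervalIntegral.norm_integral_le_abs_of_norm_le
      ((ae_restrict_iff' measurableSet_uIoc).2 <| Eventually.of_forall fun s hs ↦
        hq s (uIcc_subset_uIcc_left ht (uIoc_subset_uIcc hs))) (hint t ht)
  have hgronwall : ‖δ b‖ + η ≤ (ε + η) * Real.exp |∫ s in a..b, w s| := by
    refine le_mul_exp_abs_integral_of_le_add_abs_integral hw hw0 hcont
      (fun s ↦ by positivity) fun t ht ↦ ?_
    linarith [norm_le_norm_sub_add (δ t) (∫ s in a..t, q s), hδq t ht, hbound t ht]
  linarith

theorem tendstoUniformlyOn_of_norm_sub_le {ι : Type*} {l : Filter ι} {c M : ℝ}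
    (hc : c ∈ Icc a b) {y q : ι → ℝ → E} {y' : ℝ → E} {w : ι → ℝ → ℝ}
    (hy : ∀ k, ContinuousOn (y k) (Icc a b)) (hy' : ContinuousOn y' (Icc a b))
    (hw : ∀ k, IntervalIntegrable (w k) volume a b) (hw0 : ∀ k s, 0 ≤ w k s)
    (hwM : ∀ k, ∫ s in a..b, w k s ≤ M)
    (hyq : TendstoUniformlyOn (fun k t ↦ y k t - ∫ s in c..t, q k s) y' l (Icc a b))
    (hq : ∀ η > 0, ∀ᶠ k in l, ∀ s ∈ Icc a b, ‖q k s‖ ≤ w k s * (‖y k s - y' s‖ + η)) :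
    TendstoUniformlyOn y y' l (Icc a b) := by
  have hab : a ≤ b := hc.1.trans hc.2
  rw [Metric.tendstoUniformlyOn_iff] at hyq ⊢
  intro ε hε
  set η : ℝ := ε / (3 * Real.exp M)
  have hη : 0 < η := by positivity
  filter_upwards [hyq η hη, hq η hη] with k hyqk hqk t ht
  have hct : uIcc c t ⊆ uIcc a b := by rw [uIcc_of_le hab]; exact uIcc_subset_Icc hc ht
  have hct' : uIcc c t ⊆ Icc a b := uIcc_subset_Icc hc ht
  have hwk : |∫ s in c..t, w k s| ≤ M :=
    calc |∫ s in c..t, w k s| ≤ |∫ s in a..b, w k s| :=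
          intervalIntegral.abs_integral_mono_interval (uIoc_subset_uIoc_of_uIcc_subset_uIcc hct)
            (Eventually.of_forall (hw0 k)) (hw k)
      _ = ∫ s in a..b, w k s :=
          abs_of_nonneg (intervalIntegral.integral_nonneg hab fun s _ ↦ hw0 k s)
      _ ≤ M := hwM k
  rw [dist_comm, dist_eq_norm]
  calc ‖y k t - y' t‖ ≤ (η + η) * Real.exp |∫ s in c..t, w k s| := by
        refine norm_le_mul_exp_of_norm_sub_integral_le (δ := fun s ↦ y k s - y' s) hη.le
          (((hy k).sub hy').mono hct') ((hw k).mono_set hct) (hw0 k) (fun r hr ↦ ?_)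
          fun s hs ↦ hqk s (hct' hs)
        rw [sub_right_comm, ← dist_eq_norm, dist_comm]
        exact (hyqk r (hct' hr)).le
    _ ≤ (η + η) * Real.exp M := by gcongr
    _ = 2 / 3 * ε := by simp only [η]; field_simp; ring
    _ < ε := by linarith

end Gronwall

section WeakConvergence

theorem exists_norm_le_of_forall_dual_tendsto (𝕜 : Type*) [RCLike 𝕜] {V : Type*}
    [NormedAddCommGroup V] [NormedSpace 𝕜 V] {v : ℕ → V} {v' : V}
    (hv : ∀ φ : V →L[𝕜] 𝕜, Tendsto (fun k ↦ φ (v k)) atTop (𝓝 (φ v'))) : ∃ C, ∀ k, ‖v k‖ ≤ C := by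
  have hbdd : ∀ φ : V →L[𝕜] 𝕜, ∃ C, ∀ k, ‖φ (v k)‖ ≤ C := fun φ ↦ by
    simpa only [forall_mem_range] using
      (Metric.isBounded_range_of_tendsto _ (hv φ)).exists_norm_le
  simpa only [LinearIsometry.norm_map] using
    banach_steinhaus (g := fun k ↦ NormedSpace.inclusionInDoubleDualLi 𝕜 (v k)) hbdd

theorem tendsto_clm_apply_of_forall_dual_tendsto {𝕜 V E ι : Type*} [NontriviallyNormedField 𝕜]
    [CompleteSpace 𝕜] [AddCommGroup V] [TopologicalSpace V] [Module 𝕜 V]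
    [NormedAddCommGroup E] [NormedSpace 𝕜 E] [FiniteDimensional 𝕜 E]
    {l : Filter ι} {v : ι → V} {v' : V}
    (hv : ∀ φ : V →L[𝕜] 𝕜, Tendsto (fun i ↦ φ (v i)) l (𝓝 (φ v'))) (L : V →L[𝕜] E) :
    Tendsto (fun i ↦ L (v i)) l (𝓝 (L v')) := by
  let e := (Module.finBasis 𝕜 E).equivFunL
  exact e.toHomeomorph.isInducing.tendsto_nhds_iff.2 <| tendsto_pi_nhds.2 fun j ↦
    hv ((ContinuousLinearMap.proj j).comp (e.toContinuousLinearMap.comp L))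

theorem tendstoUniformlyOn_clm_apply {𝕜 V E X ι : Type*} [NontriviallyNormedField 𝕜]
    [NormedAddCommGroup V] [NormedSpace 𝕜 V] [NormedAddCommGroup E] [NormedSpace 𝕜 E]
    [TopologicalSpace X] {K : Set X} (hK : IsCompact K) {L : X → V →L[𝕜] E}
    (hL : ContinuousOn L K) {l : Filter ι} {v : ι → V} {v' : V} {M : ℝ} (hM : ∀ i, ‖v i‖ ≤ M)
    (hv : ∀ x ∈ K, Tendsto (fun i ↦ L x (v i)) l (𝓝 (L x v'))) :
    TendstoUniformlyOn (fun i x ↦ L x (v i)) (fun x ↦ L x v') l K := by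
  have : CompactSpace K := isCompact_iff_compactSpace.1 hK
  have hL' : Continuous fun x : K ↦ L x := continuousOn_iff_continuous_domRestrict.1 hL
  have hequi : Equicontinuous fun i (x : K) ↦ L x (v i) := fun x₀ ↦ by
    refine Metric.equicontinuousAt_of_continuity_modulus (fun x : K ↦ ‖L x₀ - L x‖ * M) ?_ _ ?_
    · have hcont : Continuous fun x : K ↦ ‖L x₀ - L x‖ * M :=
        ((continuous_const (y := L x₀)).sub hL').norm.mul_const M
      simpa only [sub_self, norm_zero, zero_mul] using hcont.tendsto x₀
    · refine Eventually.of_forall fun x i ↦ ?_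
      rw [dist_eq_norm, ← sub_apply]
      exact (L x₀ - L x).le_opNorm_of_le (hM i)
  rw [tendstoUniformlyOn_iff_tendstoUniformly_comp_coe]
  exact UniformFun.tendsto_iff_tendstoUniformly.1 <|
    (hequi.tendsto_uniformFun_iff_pi l _).2 (tendsto_pi_nhds.2 fun x ↦ hv x x.2)

variable {G : Type*} [NormedAddCommGroup G] {q : ℝ≥0∞}

theorem exists_continuous_lp_ae_eq_indicator_Iic [Fact (1 ≤ q)] (hq : q ≠ ∞) {s : Set ℝ} {f : ℝ → G}
    (hf : MemLp f q (volume.restrict s)) :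
    ∃ g : ℝ → Lp G q (volume.restrict s), Continuous g ∧
      ∀ t, g t =ᵐ[volume.restrict s] (Iic t).indicator f := by
  have hind : ∀ t, MemLp ((Iic t).indicator f) q (volume.restrict s) :=
    fun t ↦ hf.indicator measurableSet_Iic
  refine ⟨fun t ↦ (hind t).toLp, ?_, fun t ↦ (hind t).coeFn_toLp⟩
  refine Metric.continuous_iff.2 fun t ε hε ↦ ?_
  obtain ⟨δ, hδ, hfδ⟩ := hf.eLpNorm_indicator_le Fact.out hq (half_pos hε)
  refine ⟨δ, hδ, fun t' ht' ↦ ?_⟩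
  have hvol : volume.restrict s (symmDiff (Iic t') (Iic t)) ≤ ENNReal.ofReal δ :=
    calc volume.restrict s (symmDiff (Iic t') (Iic t)) ≤ volume (uIoc t t') :=
          (Measure.restrict_apply_le s _).trans <| measure_mono fun r ↦ by
            simp only [mem_symmDiff, mem_Iic, mem_uIoc]; grind
      _ ≤ ENNReal.ofReal δ := by
          rw [Real.volume_uIoc]; exact ENNReal.ofReal_le_ofReal ht'.le
  have heLp : eLpNorm ((Iic t').indicator f - (Iic t).indicator f) q (volume.restrict s) ≤
      ENNReal.ofReal (ε / 2) :=
    calc eLpNorm ((Iic t').indicator f - (Iic t).indicator f) q (volume.restrict s)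
        = eLpNorm ((symmDiff (Iic t') (Iic t)).indicator f) q (volume.restrict s) :=
          eLpNorm_congr_norm_ae <| Eventually.of_forall fun r ↦
            (apply_indicator_symmDiff norm_neg _ _ f r).symm
      _ ≤ ENNReal.ofReal (ε / 2) := hfδ _ (measurableSet_Iic.symmDiff measurableSet_Iic) hvol
  rw [dist_edist, Lp.edist_toLp_toLp]
  exact (ENNReal.toReal_le_of_le_ofReal (half_pos hε).le heLp).trans_lt (half_lt_self hε)

theorem exists_continuous_clm_apply_eq_intervalIntegral {U E : Type*} [NormedAddCommGroup U]
    [NormedSpace ℝ U] [NormedAddCommGroup E] [NormedSpace ℝ E] [CompleteSpace E] {a b : ℝ}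
    {p q : ℝ≥0∞} [Fact (1 ≤ p)] [Fact (1 ≤ q)] [q.HolderConjugate p] (hq : q ≠ ∞)
    {F : ℝ → U →L[ℝ] E} (hF : MemLp F q (volume.restrict (Icc a b))) :
    ∃ L : ℝ → Lp U p (volume.restrict (Icc a b)) →L[ℝ] E, Continuous L ∧
      ∀ t ∈ Icc a b, ∀ v, L t v = ∫ s in a..t, F s (v s) := by
  let Λ := (ContinuousLinearMap.id ℝ (U →L[ℝ] E)).lpPairing (volume.restrict (Icc a b)) q p
  obtain ⟨g, hgcont, hg⟩ := exists_continuous_lp_ae_eq_indicator_Iic hq hF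
  refine ⟨fun t ↦ Λ (g t), Λ.continuous.comp hgcont, fun t ht v ↦ ?_⟩
  calc Λ (g t) v = ∫ s in Icc a b, (Iic t).indicator (fun s ↦ F s (v s)) s := by
        rw [ContinuousLinearMap.lpPairing_eq_integral]
        refine integral_congr_ae ?_
        filter_upwards [hg t] with s hs
        by_cases hst : s ∈ Iic t <;> simp [hs, hst]
    _ = ∫ s in a..t, F s (v s) := by
        rw [integral_Icc_eq_integral_Ioc, setIntegral_indicator measurableSet_Iic, Ioc_inter_Iic,
          min_eq_right ht.2, intervalIntegral.integral_of_le ht.1]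

end WeakConvergence

section AffineIntegralEquation

variable {U E : Type*} [NormedAddCommGroup U] [NormedSpace ℝ U] [NormedAddCommGroup E]
  {p : ℝ≥0∞}

theorem memLp_restrict_of_continuousOn_of_isCompact {α : Type*} [TopologicalSpace α]
    [MeasurableSpace α] [BorelSpace α] {μ : Measure α} [IsFiniteMeasureOnCompacts μ]
    {f : α → E} {s : Set α} (hf : ContinuousOn f s) (hs : IsCompact s) (hsm : MeasurableSet s) :
    MemLp f p (μ.restrict s) := by
  have : IsFiniteMeasure (μ.restrict s) := ⟨by simpa using hs.measure_lt_top⟩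
  obtain ⟨C, hC⟩ := hs.exists_bound_of_continuousOn hf
  exact .of_bound (hf.aestronglyMeasurable_of_isCompact hs hsm) C
    ((ae_restrict_iff' hsm).2 (Eventually.of_forall hC))

variable [Fact (1 ≤ p)]

theorem integral_norm_le_norm_mul_measure_univ_rpow {α : Type*} [MeasurableSpace α]
    {μ : Measure α} [IsFiniteMeasure μ] (f : Lp E p μ) :
    ∫ x, ‖f x‖ ∂μ ≤ ‖f‖ * (μ univ ^ (1 - p⁻¹.toReal)).toReal := by
  have hp : (1 : ℝ≥0∞) ≤ p := Fact.out
  have hexp : 0 ≤ 1 - p⁻¹.toReal :=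
    sub_nonneg.2 (ENNReal.toReal_mono ENNReal.one_ne_top (ENNReal.inv_le_one.2 hp))
  have heLp : eLpNorm f 1 μ ≤ eLpNorm f p μ * μ univ ^ (1 - p⁻¹.toReal) := by
    simpa using eLpNorm_le_eLpNorm_mul_rpow_measure_univ hp (Lp.aestronglyMeasurable f)
  rw [integral_norm_eq_lintegral_enorm (Lp.aestronglyMeasurable f),
    ← eLpNorm_one_eq_lintegral_enorm, Lp.norm_def, ← ENNReal.toReal_mul]
  exact ENNReal.toReal_mono (ENNReal.mul_ne_top (Lp.eLpNorm_ne_top f)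
    (ENNReal.rpow_ne_top_of_nonneg hexp (measure_ne_top μ univ))) heLp

variable [NormedSpace ℝ E] {a b c : ℝ}

theorem intervalIntegrable_clm_apply_of_continuousOn {F : ℝ → U →L[ℝ] E}
    (hF : ContinuousOn F (Icc a b)) (v : Lp U p (volume.restrict (Icc a b))) (hab : a ≤ b) :
    IntervalIntegrable (fun s ↦ F s (v s)) volume a b := by
  rw [intervalIntegrable_iff_integrableOn_Icc_of_le hab]
  have hFq : MemLp F p.conjExponent (volume.restrict (Icc a b)) :=
    memLp_restrict_of_continuousOn_of_isCompact hF isCompact_Icc measurableSet_Icc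
  exact memLp_one_iff_integrable.1 <|
    (ContinuousLinearMap.id ℝ (U →L[ℝ] E)).memLp_of_bilin 1 hFq (Lp.memLp v)

/-- `y` is a continuous solution on `[a, b]` of the integral form of the control-affine equation
`y' = f₀ + f₁ v` with value `y₀` at the base point `c`. The vector field is evaluated along `y`
already, so `f₀` and `f₁` are functions of time only. -/
structure IsAffineIntegralSolution (a b c : ℝ) (y₀ : E) (f₀ : ℝ → E) (f₁ : ℝ → U →L[ℝ] E)
    (v : ℝ → U) (y : ℝ → E) : Prop where
  continuousOn : ContinuousOn y (Icc a b)
  continuousOn_drift : ContinuousOn f₀ (Icc a b)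
  continuousOn_input : ContinuousOn f₁ (Icc a b)
  eq_integral : ∀ t ∈ Icc a b, y t = y₀ + ∫ s in c..t, (f₀ s + f₁ s (v s))

theorem IsAffineIntegralSolution.sub_integral (hc : c ∈ Icc a b) {y₀ : E} {f₀ g₀ : ℝ → E}
    {f₁ g₁ : ℝ → U →L[ℝ] E} {v : Lp U p (volume.restrict (Icc a b))} {y : ℝ → E}
    (hy : IsAffineIntegralSolution a b c y₀ f₀ f₁ v y) (hg₀ : ContinuousOn g₀ (Icc a b))
    (hg₁ : ContinuousOn g₁ (Icc a b)) {t : ℝ} (ht : t ∈ Icc a b) :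
    y t - ∫ s in c..t, ((f₀ s - g₀ s) + (f₁ s - g₁ s) (v s)) =
      y₀ + (∫ s in c..t, g₀ s) + ∫ s in c..t, g₁ s (v s) := by
  have hct : uIcc c t ⊆ Icc a b := uIcc_subset_Icc hc ht
  have hint₀ : ∀ f : ℝ → E, ContinuousOn f (Icc a b) → IntervalIntegrable f volume c t :=
    fun f hf ↦ (hf.mono hct).intervalIntegrable
  have hint₁ : ∀ F : ℝ → U →L[ℝ] E, ContinuousOn F (Icc a b) →
      IntervalIntegrable (fun s ↦ F s (v s)) volume c t :=
    fun F hF ↦ (intervalIntegrable_clm_apply_of_continuousOn hF v (hc.1.trans hc.2)).mono_set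
      (hct.trans Icc_subset_uIcc)
  have hf := (hint₀ _ hy.continuousOn_drift).add (hint₁ _ hy.continuousOn_input)
  have hfg := (hint₀ (fun s ↦ f₀ s - g₀ s) (hy.continuousOn_drift.sub hg₀)).add
    (hint₁ (fun s ↦ f₁ s - g₁ s) (hy.continuousOn_input.sub hg₁))
  rw [hy.eq_integral t ht, add_sub_assoc, ← intervalIntegral.integral_sub hf hfg, add_assoc,
    ← intervalIntegral.integral_add (hint₀ _ hg₀) (hint₁ _ hg₁)]
  congr 2 with s
  simp only [sub_apply]
  abel

variable [FiniteDimensional ℝ E]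
  {u : ℕ → Lp U p (volume.restrict (Icc a b))} {u' : Lp U p (volume.restrict (Icc a b))}

theorem tendstoUniformlyOn_intervalIntegral_clm_apply (hp : 1 < p) (hc : c ∈ Icc a b)
    {F : ℝ → U →L[ℝ] E} (hF : ContinuousOn F (Icc a b))
    (hu : ∀ φ : Lp U p (volume.restrict (Icc a b)) →L[ℝ] ℝ,
      Tendsto (fun k ↦ φ (u k)) atTop (𝓝 (φ u'))) :
    TendstoUniformlyOn (fun k t ↦ ∫ s in c..t, F s (u k s)) (fun t ↦ ∫ s in c..t, F s (u' s))
      atTop (Icc a b) := by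
  have hab : a ≤ b := hc.1.trans hc.2
  have : CompleteSpace E := FiniteDimensional.complete ℝ E
  have : Fact (1 ≤ p.conjExponent) := ⟨le_self_add⟩
  have hq : p.conjExponent ≠ ∞ := by
    simpa [ENNReal.conjExponent, tsub_eq_zero_iff_le] using hp
  obtain ⟨L, hLcont, hL⟩ := exists_continuous_clm_apply_eq_intervalIntegral (p := p) hq
    (memLp_restrict_of_continuousOn_of_isCompact hF isCompact_Icc measurableSet_Icc)
  obtain ⟨M, hM⟩ := exists_norm_le_of_forall_dual_tendsto ℝ hu
  have hLc : ∀ v, ∀ t ∈ Icc a b, (L t - L c) v = ∫ s in c..t, F s (v s) := fun v t ht ↦ by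
    have hint := fun r (hr : r ∈ Icc a b) ↦
      (intervalIntegrable_clm_apply_of_continuousOn hF v hab).mono_set
        (uIcc_subset_uIcc_left (by rwa [uIcc_of_le hab]) : uIcc a r ⊆ uIcc a b)
    rw [sub_apply, hL t ht, hL c hc,
      intervalIntegral.integral_interval_sub_left (hint t ht) (hint c hc)]
  exact ((tendstoUniformlyOn_clm_apply isCompact_Icc (hLcont.sub continuous_const).continuousOn hM
    fun t _ ↦ tendsto_clm_apply_of_forall_dual_tendsto hu (L t - L c)).congr
      (Eventually.of_forall fun k ↦ hLc (u k))).congr_right (hLc u')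

theorem tendstoUniformlyOn_of_isAffineIntegralSolution (hp : 1 < p) (hc : c ∈ Icc a b)
    (hu : ∀ φ : Lp U p (volume.restrict (Icc a b)) →L[ℝ] ℝ,
      Tendsto (fun k ↦ φ (u k)) atTop (𝓝 (φ u')))
    {y₀ : E} {f₀ : ℕ → ℝ → E} {f₀' : ℝ → E} {f₁ : ℕ → ℝ → U →L[ℝ] E} {f₁' : ℝ → U →L[ℝ] E}
    {y : ℕ → ℝ → E} {y' : ℝ → E} {K : ℝ≥0}
    (hy : ∀ k, IsAffineIntegralSolution a b c y₀ (f₀ k) (f₁ k) (u k) (y k))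
    (hy' : IsAffineIntegralSolution a b c y₀ f₀' f₁' u' y')
    (hf₀ : ∀ η > 0, ∀ᶠ k in atTop, ∀ s ∈ Icc a b, ‖f₀ k s - f₀' s‖ ≤ K * ‖y k s - y' s‖ + η)
    (hf₁ : ∀ η > 0, ∀ᶠ k in atTop, ∀ s ∈ Icc a b, ‖f₁ k s - f₁' s‖ ≤ K * ‖y k s - y' s‖ + η) :
    TendstoUniformlyOn y y' atTop (Icc a b) := by
  have hab : a ≤ b := hc.1.trans hc.2
  obtain ⟨M, hM⟩ := exists_norm_le_of_forall_dual_tendsto ℝ hu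
  set C : ℝ := (volume.restrict (Icc a b) univ ^ (1 - p⁻¹.toReal)).toReal
  have hnorm : ∀ k, IntervalIntegrable (fun s ↦ ‖u k s‖) volume a b := fun k ↦
    (intervalIntegrable_iff_integrableOn_Icc_of_le hab).2
      ((Lp.memLp (u k)).integrable Fact.out).norm
  refine tendstoUniformlyOn_of_norm_sub_le hc (M := (K + 1) * ((b - a) + M * C))
    (q := fun k s ↦ (f₀ k s - f₀' s) + (f₁ k s - f₁' s) (u k s))
    (w := fun k s ↦ (K + 1) * (1 + ‖u k s‖)) (fun k ↦ (hy k).continuousOn) hy'.continuousOn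
    (fun k ↦ (intervalIntegrable_const.add (hnorm k)).const_mul _) (fun k s ↦ by positivity)
    (fun k ↦ ?_) ?_ fun η hη ↦ ?_
  · rw [intervalIntegral.integral_const_mul, intervalIntegral.integral_add
      intervalIntegrable_const (hnorm k), intervalIntegral.integral_const, smul_eq_mul, mul_one,
      intervalIntegral.integral_of_le hab, ← integral_Icc_eq_integral_Ioc]
    gcongr
    exact (integral_norm_le_norm_mul_measure_univ_rpow (u k)).trans (by gcongr; exact hM k)
  · have hlin := tendstoUniformlyOn_intervalIntegral_clm_apply hp hc hy'.continuousOn_input hu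
    rw [Metric.tendstoUniformlyOn_iff] at hlin ⊢
    intro ε hε
    filter_upwards [hlin ε hε] with k hk t ht
    have hyt := hy'.sub_integral hc hy'.continuousOn_drift hy'.continuousOn_input ht
    simp only [sub_self, zero_apply, add_zero, intervalIntegral.integral_zero, sub_zero] at hyt
    rw [(hy k).sub_integral hc hy'.continuousOn_drift hy'.continuousOn_input ht, hyt,
      dist_add_left]
    exact hk t ht
  · filter_upwards [hf₀ η hη, hf₁ η hη] with k hk₀ hk₁ s hs
    calc ‖(f₀ k s - f₀' s) + (f₁ k s - f₁' s) (u k s)‖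
        ≤ (K * ‖y k s - y' s‖ + η) + (K * ‖y k s - y' s‖ + η) * ‖u k s‖ :=
          norm_add_le_of_le (hk₀ s hs) (ContinuousLinearMap.le_of_opNorm_le _ (hk₁ s hs) _)
      _ = (K * ‖y k s - y' s‖ + η) * (1 + ‖u k s‖) := by ring
      _ ≤ ((K + 1) * (‖y k s - y' s‖ + η)) * (1 + ‖u k s‖) := by
          gcongr
          nlinarith [norm_nonneg (y k s - y' s), K.coe_nonneg]
      _ = (K + 1) * (1 + ‖u k s‖) * (‖y k s - y' s‖ + η) := by ring

end AffineIntegralEquation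

section LinearIntegralEquation

theorem eventually_norm_clm_apply_apply_sub_le {𝕜 V W Z S ι : Type*} [NontriviallyNormedField 𝕜]
    [NormedAddCommGroup V] [NormedSpace 𝕜 V] [NormedAddCommGroup W] [NormedSpace 𝕜 W]
    [NormedAddCommGroup Z] [NormedSpace 𝕜 Z] {B : V →L[𝕜] W →L[𝕜] Z}
    (hB : ∀ v w, ‖B v w‖ ≤ ‖v‖ * ‖w‖)
    {l : Filter ι} {s : Set S} {N : ι → S → V} {N' : S → V} {A : ι → S → W} {A' : S → W}
    {K D η : ℝ} (hA : TendstoUniformlyOn A A' l s) (hAK : ∀ k, ∀ x ∈ s, ‖A k x‖ ≤ K)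
    (hN' : ∀ x ∈ s, ‖N' x‖ ≤ D) (hη : 0 < η) :
    ∀ᶠ k in l, ∀ x ∈ s, ‖B (N k x) (A k x) - B (N' x) (A' x)‖ ≤ K * ‖N k x - N' x‖ + η := by
  have hD : 0 < |D| + 1 := by positivity
  filter_upwards [Metric.tendstoUniformlyOn_iff.1 hA _ (div_pos hη hD)] with k hk x hx
  have hAx : ‖A k x - A' x‖ ≤ η / (|D| + 1) := by
    rw [← dist_eq_norm, dist_comm]; exact (hk x hx).le
  have hNx : ‖N' x‖ ≤ |D| + 1 := (hN' x hx).trans ((le_abs_self D).trans (le_add_of_nonneg_right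
    zero_le_one))
  calc ‖B (N k x) (A k x) - B (N' x) (A' x)‖
      = ‖B (N k x - N' x) (A k x) + B (N' x) (A k x - A' x)‖ := by
        simp only [map_sub, sub_apply, sub_add_sub_cancel]
    _ ≤ ‖N k x - N' x‖ * K + (|D| + 1) * (η / (|D| + 1)) :=
        norm_add_le_of_le ((hB _ _).trans (by gcongr; exact hAK k x hx))
          ((hB _ _).trans (by gcongr))
    _ = K * ‖N k x - N' x‖ + η := by field_simp

theorem tendstoUniformlyOn_of_linear_integral_eq {U V W : Type*} [NormedAddCommGroup U]
    [NormedSpace ℝ U] [NormedAddCommGroup V] [NormedSpace ℝ V] [FiniteDimensional ℝ V]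
    [NormedAddCommGroup W] [NormedSpace ℝ W] {p : ℝ≥0∞} [Fact (1 ≤ p)] (hp : 1 < p)
    {a b c : ℝ} (hc : c ∈ Icc a b)
    {u : ℕ → Lp U p (volume.restrict (Icc a b))} {u' : Lp U p (volume.restrict (Icc a b))}
    (hu : ∀ φ : Lp U p (volume.restrict (Icc a b)) →L[ℝ] ℝ,
      Tendsto (fun k ↦ φ (u k)) atTop (𝓝 (φ u')))
    {A : ℕ → ℝ → W} {A' : ℝ → W} {B : ℕ → ℝ → U →L[ℝ] W} {B' : ℝ → U →L[ℝ] W} {K : ℝ≥0}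
    (hA : ∀ k, ContinuousOn (A k) (Icc a b)) (hA' : ContinuousOn A' (Icc a b))
    (hB : ∀ k, ContinuousOn (B k) (Icc a b)) (hB' : ContinuousOn B' (Icc a b))
    (hAK : ∀ k, ∀ s ∈ Icc a b, ‖A k s‖ ≤ K) (hBK : ∀ k, ∀ s ∈ Icc a b, ‖B k s‖ ≤ K)
    (hAA' : TendstoUniformlyOn A A' atTop (Icc a b))
    (hBB' : TendstoUniformlyOn B B' atTop (Icc a b))
    {Φ : V →L[ℝ] W →L[ℝ] V} (hΦ : ∀ v w, ‖Φ v w‖ ≤ ‖v‖ * ‖w‖)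
    {y₀ : V} {y : ℕ → ℝ → V} {y' : ℝ → V}
    (hy : ∀ k, ContinuousOn (y k) (Icc a b)) (hy' : ContinuousOn y' (Icc a b))
    (hyeq : ∀ k, ∀ t ∈ Icc a b, y k t = y₀ + ∫ s in c..t, Φ (y k s) (A k s + B k s (u k s)))
    (hyeq' : ∀ t ∈ Icc a b, y' t = y₀ + ∫ s in c..t, Φ (y' s) (A' s + B' s (u' s))) :
    TendstoUniformlyOn y y' atTop (Icc a b) := by
  obtain ⟨D, hD⟩ := isCompact_Icc.exists_bound_of_continuousOn hy'
  let Ψ := (ContinuousLinearMap.compL ℝ U W V).comp Φ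
  have hΨ : ∀ v L, ‖Ψ v L‖ ≤ ‖v‖ * ‖L‖ := fun v L ↦
    (ContinuousLinearMap.opNorm_comp_le (Φ v) L).trans <| by
      gcongr; exact (Φ v).opNorm_le_bound (norm_nonneg v) (hΦ v)
  have hsol : ∀ {v : ℝ → U} {z : ℝ → V} {A : ℝ → W} {B : ℝ → U →L[ℝ] W},
      ContinuousOn z (Icc a b) → ContinuousOn A (Icc a b) → ContinuousOn B (Icc a b) →
      (∀ t ∈ Icc a b, z t = y₀ + ∫ s in c..t, Φ (z s) (A s + B s (v s))) →
      IsAffineIntegralSolution a b c y₀ (fun s ↦ Φ (z s) (A s)) (fun s ↦ Ψ (z s) (B s)) v z :=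
    fun hz hA hB hzeq ↦
      ⟨hz, (Φ.continuous.comp_continuousOn hz).clm_apply hA,
        (Ψ.continuous.comp_continuousOn hz).clm_apply hB,
        fun t ht ↦ (hzeq t ht).trans (by simp only [map_add]; rfl)⟩
  exact tendstoUniformlyOn_of_isAffineIntegralSolution hp hc hu
    (fun k ↦ hsol (hy k) (hA k) (hB k) (hyeq k)) (hsol hy' hA' hB' hyeq')
    (fun η ↦ eventually_norm_clm_apply_apply_sub_le hΦ hAA' hAK hD)
    (fun η ↦ eventually_norm_clm_apply_apply_sub_le hΨ hBB' hBK hD)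

end LinearIntegralEquation

section LipschitzC11

variable {E F G : Type*} [NormedAddCommGroup E] [NormedSpace ℝ E] [NormedAddCommGroup F]
  [NormedSpace ℝ F] [NormedAddCommGroup G] [NormedSpace ℝ G] {f g : E → F}

/-- The class `C^{1,1}` with global constants: `f` is differentiable, and `f` and its derivative
are both Lipschitz. This is the regularity of vector fields for which trajectories and their
linearized flows depend continuously on the control. -/
structure IsLipschitzC11 (f : E → F) : Prop where
  differentiable : Differentiable ℝ f
  exists_lipschitzWith : ∃ K, LipschitzWith K f
  exists_lipschitzWith_fderiv : ∃ K, LipschitzWith K (fderiv ℝ f)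

theorem exists_lipschitzWith_of_norm_fderiv_le (hf : Differentiable ℝ f)
    (hf' : ∃ C, ∀ x, ‖fderiv ℝ f x‖ ≤ C) : ∃ K, LipschitzWith K f := by
  obtain ⟨C, hC⟩ := hf'
  exact ⟨C.toNNReal, lipschitzWith_of_nnnorm_fderiv_le hf fun x ↦ by
    simpa only [norm_toNNReal] using Real.toNNReal_mono (hC x)⟩

namespace IsLipschitzC11

theorem of_contDiff (hf : ContDiff ℝ 2 f) (hf' : ∃ C, ∀ x, ‖fderiv ℝ f x‖ ≤ C)
    (hf'' : ∃ C, ∀ x, ‖fderiv ℝ (fderiv ℝ f) x‖ ≤ C) : IsLipschitzC11 f where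
  differentiable := hf.differentiable two_ne_zero
  exists_lipschitzWith := exists_lipschitzWith_of_norm_fderiv_le (hf.differentiable two_ne_zero) hf'
  exists_lipschitzWith_fderiv := exists_lipschitzWith_of_norm_fderiv_le
    ((hf.fderiv_right (m := 1) (by norm_num)).differentiable one_ne_zero) hf''

theorem exists_forall_lipschitzWith (hf : IsLipschitzC11 f) {g : E → G} (hg : IsLipschitzC11 g) :
    ∃ K, LipschitzWith K f ∧ LipschitzWith K (fderiv ℝ f) ∧
      LipschitzWith K g ∧ LipschitzWith K (fderiv ℝ g) := by
  obtain ⟨K₁, h₁⟩ := hf.exists_lipschitzWith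
  obtain ⟨K₂, h₂⟩ := hf.exists_lipschitzWith_fderiv
  obtain ⟨K₃, h₃⟩ := hg.exists_lipschitzWith
  obtain ⟨K₄, h₄⟩ := hg.exists_lipschitzWith_fderiv
  exact ⟨max (max K₁ K₂) (max K₃ K₄), h₁.weaken (by simp), h₂.weaken (by simp),
    h₃.weaken (by simp), h₄.weaken (by simp)⟩

theorem add (hf : IsLipschitzC11 f) (hg : IsLipschitzC11 g) :
    IsLipschitzC11 fun x ↦ f x + g x := by
  obtain ⟨K, hfK, hfK', hgK, hgK'⟩ := hf.exists_forall_lipschitzWith hg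
  refine ⟨hf.differentiable.fun_add hg.differentiable, ⟨_, hfK.add hgK⟩, K + K, ?_⟩
  have hfderiv : fderiv ℝ (fun x ↦ f x + g x) = fun x ↦ fderiv ℝ f x + fderiv ℝ g x :=
    funext fun x ↦ fderiv_fun_add (hf.differentiable x) (hg.differentiable x)
  rw [hfderiv]
  exact hfK'.add hgK'

theorem sum {ι : Type*} {s : Finset ι} {f : ι → E → F} (hf : ∀ i ∈ s, IsLipschitzC11 (f i)) :
    IsLipschitzC11 fun x ↦ ∑ i ∈ s, f i x := by
  classical
  induction s using Finset.induction_on with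
  | empty =>
    exact ⟨by simp, ⟨0, by simp⟩, 0, by simp⟩
  | insert i s his ih =>
    simpa only [Finset.sum_insert his] using (hf i (Finset.mem_insert_self i s)).add
      (ih fun j hj ↦ hf j (Finset.mem_insert_of_mem hj))

theorem clm_apply (hf : IsLipschitzC11 f) (L : F →L[ℝ] G) : IsLipschitzC11 fun x ↦ L (f x) := by
  obtain ⟨K, hK⟩ := hf.exists_lipschitzWith
  obtain ⟨K', hK'⟩ := hf.exists_lipschitzWith_fderiv
  have hfderiv : fderiv ℝ (fun x ↦ L (f x)) = fun x ↦ L.comp (fderiv ℝ f x) := funext fun x ↦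
    (L.hasFDerivAt.comp x (hf.differentiable x).hasFDerivAt).fderiv
  refine ⟨L.differentiable.comp hf.differentiable, ⟨_, L.lipschitz.comp hK⟩,
    ‖ContinuousLinearMap.compL ℝ E F G L‖₊ * K', ?_⟩
  rw [hfderiv]
  exact (ContinuousLinearMap.compL ℝ E F G L).lipschitz.comp hK'

end IsLipschitzC11

end LipschitzC11

section ControlAffineSystem

variable {U E : Type*} [NormedAddCommGroup U] [NormedSpace ℝ U] [NormedAddCommGroup E]
  [NormedSpace ℝ E] [FiniteDimensional ℝ E] {p : ℝ≥0∞} [Fact (1 ≤ p)]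

theorem tendstoUniformlyOn_trajectory (hp : 1 < p) {a b c : ℝ} (hc : c ∈ Icc a b) {x : E}
    {X₀ : E → E} {X : E → U →L[ℝ] E} {K : ℝ≥0} (hX₀ : LipschitzWith K X₀) (hX : LipschitzWith K X)
    {u : ℕ → Lp U p (volume.restrict (Icc a b))} {u' : Lp U p (volume.restrict (Icc a b))}
    (hu : ∀ φ : Lp U p (volume.restrict (Icc a b)) →L[ℝ] ℝ,
      Tendsto (fun k ↦ φ (u k)) atTop (𝓝 (φ u')))
    {γ : ℕ → ℝ → E} {γ' : ℝ → E}
    (hγ : ∀ k, ContinuousOn (γ k) (Icc a b)) (hγ' : ContinuousOn γ' (Icc a b))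
    (hγeq : ∀ k, ∀ t ∈ Icc a b, γ k t = x + ∫ s in c..t, (X₀ (γ k s) + X (γ k s) (u k s)))
    (hγeq' : ∀ t ∈ Icc a b, γ' t = x + ∫ s in c..t, (X₀ (γ' s) + X (γ' s) (u' s))) :
    TendstoUniformlyOn γ γ' atTop (Icc a b) := by
  refine tendstoUniformlyOn_of_isAffineIntegralSolution hp hc hu (K := K)
    (fun k ↦ ⟨hγ k, hX₀.continuous.comp_continuousOn (hγ k),
      hX.continuous.comp_continuousOn (hγ k), hγeq k⟩)
    ⟨hγ', hX₀.continuous.comp_continuousOn hγ', hX.continuous.comp_continuousOn hγ', hγeq'⟩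
    (fun η hη ↦ Eventually.of_forall fun k s _ ↦ ?_)
    (fun η hη ↦ Eventually.of_forall fun k s _ ↦ ?_)
  · exact (hX₀.norm_sub_le _ _).trans (le_add_of_nonneg_right hη.le)
  · exact (hX.norm_sub_le _ _).trans (le_add_of_nonneg_right hη.le)

theorem tendstoUniformlyOn_linearizedFlow (hp : 1 < p) {T : ℝ} (hT : 0 ≤ T) {x : E}
    {X₀ : E → E} {X : E → U →L[ℝ] E} (hX₀ : IsLipschitzC11 X₀) (hX : IsLipschitzC11 X)
    {u : ℕ → Lp U p (volume.restrict (Icc 0 T))} {u' : Lp U p (volume.restrict (Icc 0 T))}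
    (hu : ∀ φ : Lp U p (volume.restrict (Icc 0 T)) →L[ℝ] ℝ,
      Tendsto (fun k ↦ φ (u k)) atTop (𝓝 (φ u')))
    {γ : ℕ → ℝ → E} {γ' : ℝ → E}
    (hγ : ∀ k, ContinuousOn (γ k) (Icc 0 T)) (hγ' : ContinuousOn γ' (Icc 0 T))
    (hγeq : ∀ k, ∀ t ∈ Icc 0 T, γ k t = x + ∫ s in 0..t, (X₀ (γ k s) + X (γ k s) (u k s)))
    (hγeq' : ∀ t ∈ Icc 0 T, γ' t = x + ∫ s in 0..t, (X₀ (γ' s) + X (γ' s) (u' s)))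
    {N : ℕ → ℝ → E →L[ℝ] E} {N' : ℝ → E →L[ℝ] E}
    (hN : ∀ k, ContinuousOn (N k) (Icc 0 T)) (hN' : ContinuousOn N' (Icc 0 T))
    (hNeq : ∀ k, ∀ t ∈ Icc 0 T, N k t = ContinuousLinearMap.id ℝ E + ∫ s in t..T,
      (N k s).comp (fderiv ℝ X₀ (γ k s) + (fderiv ℝ X (γ k s)).flip (u k s)))
    (hNeq' : ∀ t ∈ Icc 0 T, N' t = ContinuousLinearMap.id ℝ E + ∫ s in t..T,
      (N' s).comp (fderiv ℝ X₀ (γ' s) + (fderiv ℝ X (γ' s)).flip (u' s))) :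
    TendstoUniformlyOn N N' atTop (Icc 0 T) := by
  obtain ⟨K, hX₀K, hDX₀K, hXK, hDXK⟩ := hX₀.exists_forall_lipschitzWith hX
  have hγγ' : TendstoUniformlyOn γ γ' atTop (Icc 0 T) :=
    tendstoUniformlyOn_trajectory hp (left_mem_Icc.2 hT) hX₀K hXK hu hγ hγ' hγeq hγeq'
  have hA : LipschitzWith K fun y ↦ -fderiv ℝ X₀ y := hDX₀K.neg
  have hB : LipschitzWith K fun y ↦ -(fderiv ℝ X y).flip :=
    ((ContinuousLinearMap.flipₗᵢ ℝ E U E).lipschitz.comp hDXK).neg.weaken (one_mul K).le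
  have hreverse : ∀ {M : ℝ → E →L[ℝ] E} {z : ℝ → E} {v : ℝ → U} {t : ℝ},
      (M t = ContinuousLinearMap.id ℝ E + ∫ s in t..T,
        (M s).comp (fderiv ℝ X₀ (z s) + (fderiv ℝ X (z s)).flip (v s))) →
      M t = ContinuousLinearMap.id ℝ E + ∫ s in T..t, ContinuousLinearMap.compL ℝ E E E (M s)
        (-fderiv ℝ X₀ (z s) + (-(fderiv ℝ X (z s)).flip) (v s)) := fun h ↦ by
    rw [h, intervalIntegral.integral_symm, ← intervalIntegral.integral_neg]
    congr 2 with s : 1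
    simp [ContinuousLinearMap.comp_add, add_comm]
  exact tendstoUniformlyOn_of_linear_integral_eq hp (right_mem_Icc.2 hT) hu
    (fun k ↦ hA.continuous.comp_continuousOn (hγ k)) (hA.continuous.comp_continuousOn hγ')
    (fun k ↦ hB.continuous.comp_continuousOn (hγ k)) (hB.continuous.comp_continuousOn hγ')
    (fun k s _ ↦ by simpa using norm_fderiv_le_of_lipschitz ℝ hX₀K)
    (fun k s _ ↦ by simpa using norm_fderiv_le_of_lipschitz ℝ hXK)
    (hA.uniformContinuous.comp_tendstoUniformlyOn hγγ')
    (hB.uniformContinuous.comp_tendstoUniformlyOn hγγ')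
    ContinuousLinearMap.opNorm_comp_le hN hN'
    (fun k t ht ↦ hreverse (hNeq k t ht)) (fun t ht ↦ hreverse (hNeq' t ht))

end ControlAffineSystem

section CoordinateFields

variable {ι E : Type*} [Fintype ι] [NormedAddCommGroup E] [NormedSpace ℝ E]

/-- The input operator `v ↦ ∑ i, vᵢ Xᵢ(y)` of a control system with the vector fields `Xᵢ` as
controlled directions; it turns such a system into a control-affine system with an
operator-valued field. -/
def inputOperator (X : ι → E → E) (y : E) : EuclideanSpace ℝ ι →L[ℝ] E :=
  ∑ i, ContinuousLinearMap.smulRightL ℝ _ E (EuclideanSpace.proj i) (X i y)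

theorem inputOperator_apply (X : ι → E → E) (y : E) (v : EuclideanSpace ℝ ι) :
    inputOperator X y v = ∑ i, v i • X i y := by
  simp [inputOperator, sum_apply]

theorem isLipschitzC11_inputOperator {X : ι → E → E} (hX : ∀ i, IsLipschitzC11 (X i)) :
    IsLipschitzC11 (inputOperator X) :=
  .sum fun i _ ↦ (hX i).clm_apply _

theorem fderiv_inputOperator_flip_apply {X : ι → E → E} {y : E}
    (hX : ∀ i, DifferentiableAt ℝ (X i) y) (v : EuclideanSpace ℝ ι) :
    (fderiv ℝ (inputOperator X) y).flip v = ∑ i, v i • fderiv ℝ (X i) y := by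
  have hderiv : HasFDerivAt (inputOperator X) (∑ i, (ContinuousLinearMap.smulRightL ℝ _ E
      (EuclideanSpace.proj i)).comp (fderiv ℝ (X i) y)) y :=
    .fun_sum fun i _ ↦ (ContinuousLinearMap.hasFDerivAt _).comp y (hX i).hasFDerivAt
  ext w
  simp [hderiv.fderiv, sum_apply]

variable [FiniteDimensional ℝ E] {p : ℝ≥0∞} [Fact (1 ≤ p)]

theorem stmt12_general (hp : 1 < p) {T : ℝ} (hT : 0 ≤ T) {x : E} {X₀ : E → E} {X : ι → E → E}
    (hX₀ : IsLipschitzC11 X₀) (hX : ∀ i, IsLipschitzC11 (X i))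
    {u : ℕ → Lp (EuclideanSpace ℝ ι) p (volume.restrict (Icc 0 T))}
    {u' : Lp (EuclideanSpace ℝ ι) p (volume.restrict (Icc 0 T))}
    (hu : ∀ φ : Lp (EuclideanSpace ℝ ι) p (volume.restrict (Icc 0 T)) →L[ℝ] ℝ,
      Tendsto (fun k ↦ φ (u k)) atTop (𝓝 (φ u')))
    {γ : ℕ → ℝ → E} {γ' : ℝ → E}
    (hγ : ∀ k, ContinuousOn (γ k) (Icc 0 T)) (hγ' : ContinuousOn γ' (Icc 0 T))
    (hγeq : ∀ k, ∀ t ∈ Icc 0 T,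
      γ k t = x + ∫ s in 0..t, (X₀ (γ k s) + ∑ i, u k s i • X i (γ k s)))
    (hγeq' : ∀ t ∈ Icc 0 T, γ' t = x + ∫ s in 0..t, (X₀ (γ' s) + ∑ i, u' s i • X i (γ' s)))
    {N : ℕ → ℝ → E →L[ℝ] E} {N' : ℝ → E →L[ℝ] E}
    (hN : ∀ k, ContinuousOn (N k) (Icc 0 T)) (hN' : ContinuousOn N' (Icc 0 T))
    (hNeq : ∀ k, ∀ t ∈ Icc 0 T, N k t = ContinuousLinearMap.id ℝ E + ∫ s in t..T,
      (N k s).comp (fderiv ℝ X₀ (γ k s) + ∑ i, u k s i • fderiv ℝ (X i) (γ k s)))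
    (hNeq' : ∀ t ∈ Icc 0 T, N' t = ContinuousLinearMap.id ℝ E + ∫ s in t..T,
      (N' s).comp (fderiv ℝ X₀ (γ' s) + ∑ i, u' s i • fderiv ℝ (X i) (γ' s))) :
    TendstoUniformlyOn N N' atTop (Icc 0 T) := by
  simp only [← inputOperator_apply] at hγeq hγeq'
  simp only [← fderiv_inputOperator_flip_apply fun i ↦ (hX i).differentiable _] at hNeq hNeq'
  exact tendstoUniformlyOn_linearizedFlow hp hT hX₀ (isLipschitzC11_inputOperator hX) hu
    hγ hγ' hγeq hγeq' hN hN' hNeq hNeq'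

end CoordinateFields

/-- with `A_w(s) = DX₀(γ_w(s)) + Σᵢ wᵢ(s) DXᵢ(γ_w(s))` and `N_w` the
continuous solution of `N_w(t) = I + ∫ₜ^T N_w(s)A_w(s) ds`, weak convergence
`u_k ⇀ u` in `L^p([0,T],ℝ^d)` implies `N_{u_k} → N_u` uniformly on `[0,T]`. -/
theorem stmt12 (n d : ℕ) (p : ℝ) (hp : 1 < p) [Fact (1 ≤ ENNReal.ofReal p)]
    (T : ℝ) (hT : 0 < T) (x : EuclideanSpace ℝ (Fin n))
    (X0 : EuclideanSpace ℝ (Fin n) → EuclideanSpace ℝ (Fin n))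
    (X : Fin d → EuclideanSpace ℝ (Fin n) → EuclideanSpace ℝ (Fin n))
    (hX0smooth : ContDiff ℝ (⊤ : ℕ∞) X0) (hXsmooth : ∀ i, ContDiff ℝ (⊤ : ℕ∞) (X i))
    (hX0bdd : ∃ C, ∀ y, ‖X0 y‖ ≤ C) (hXbdd : ∃ C, ∀ i y, ‖X i y‖ ≤ C)
    (hX0der : ∃ C, ∀ y, ‖fderiv ℝ X0 y‖ ≤ C)
    (hXder : ∃ C, ∀ i y, ‖fderiv ℝ (X i) y‖ ≤ C)
    (hX0der2 : ∃ C, ∀ y, ‖fderiv ℝ (fderiv ℝ X0) y‖ ≤ C)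
    (hXder2 : ∃ C, ∀ i y, ‖fderiv ℝ (fderiv ℝ (X i)) y‖ ≤ C)
    (u : ℕ → Lp (EuclideanSpace ℝ (Fin d)) (ENNReal.ofReal p)
      (volume.restrict (Set.Icc (0:ℝ) T)))
    (ulim : Lp (EuclideanSpace ℝ (Fin d)) (ENNReal.ofReal p)
      (volume.restrict (Set.Icc (0:ℝ) T)))
    (hweak : ∀ φ : Lp (EuclideanSpace ℝ (Fin d)) (ENNReal.ofReal p)
        (volume.restrict (Set.Icc (0:ℝ) T)) →L[ℝ] ℝ,
      Tendsto (fun k => φ (u k)) atTop (𝓝 (φ ulim)))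
    (γ : ℕ → ℝ → EuclideanSpace ℝ (Fin n))
    (γlim : ℝ → EuclideanSpace ℝ (Fin n))
    (hγ : ∀ k, IsTrajectory X0 X x T (⇑(u k)) (γ k))
    (hγlim : IsTrajectory X0 X x T (⇑ulim) γlim)
    (Nseq : ℕ → ℝ → (EuclideanSpace ℝ (Fin n) →L[ℝ] EuclideanSpace ℝ (Fin n)))
    (Nlim : ℝ → (EuclideanSpace ℝ (Fin n) →L[ℝ] EuclideanSpace ℝ (Fin n)))
    (hNseqcont : ∀ k, ContinuousOn (Nseq k) (Set.Icc 0 T))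
    (hNseq : ∀ k, ∀ t ∈ Set.Icc (0:ℝ) T,
      Nseq k t = ContinuousLinearMap.id ℝ (EuclideanSpace ℝ (Fin n)) +
        ∫ s in t..T, (Nseq k s).comp
          (fderiv ℝ X0 (γ k s) + ∑ i, u k s i • fderiv ℝ (X i) (γ k s)))
    (hNlimcont : ContinuousOn Nlim (Set.Icc 0 T))
    (hNlim : ∀ t ∈ Set.Icc (0:ℝ) T,
      Nlim t = ContinuousLinearMap.id ℝ (EuclideanSpace ℝ (Fin n)) +
        ∫ s in t..T, (Nlim s).comp
          (fderiv ℝ X0 (γlim s) + ∑ i, ulim s i • fderiv ℝ (X i) (γlim s))) :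
    TendstoUniformlyOn Nseq Nlim atTop (Set.Icc 0 T) := by
  exact stmt12_general (by simpa using hp) hT.le
    (.of_contDiff (contDiff_infty.1 hX0smooth 2) hX0der hX0der2)
    (fun i ↦ .of_contDiff (contDiff_infty.1 (hXsmooth i) 2)
      (hXder.imp fun _ hC ↦ hC i) (hXder2.imp fun _ hC ↦ hC i))
    hweak (fun k ↦ (hγ k).1) hγlim.1 (fun k ↦ (hγ k).2) hγlim.2 hNseqcont hNlimcont hNseq hNlim
end
end
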